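/- Let (Ω,Σ,P) be a probability space whose measure P has the Darboux property, and let I be an additive partition entropy. Then there exists a unique function Δ assigning a real number Δ(V,W,λ) to every pair of measurable sets V, W with P(V)=P(W) and every λ>0, such that: (1) whenever V∩W=∅ and there exists 𝒜 ∈ F_λ(V,W), one has Δ(V,W,λ) = I(T_{V,W}𝒜) − I(𝒜); (2) for any measurable U, V, W with P(U)=P(V)=P(W), Δ(U,W,λ) = Δ(U,V,λ) + Δ(V,W,λ); (3) if V = V₁⊔V₂ and W = W₁⊔W₂ (disjoint unions) with P(Vᵢ)=P(Wᵢ) for i=1,2, then Δ(V,W,λ) = Δ(V₁,W₁,λ) + Δ(V₂,W₂,λ); (4) for any κ>0, Δ(V,W,κλ) = Δ(V,W,κ) + Δ(V,W,λ). -/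

import Mathlib

/-!
For `𝒜 ∈ F_λ(V,W)` with designated atoms `A₁ ⊇ V`, `A₂ ⊇ W`, consider the increment
`I (T_{V,W} 𝒜) - I 𝒜`. The proof has two parts: the increment depends only on `V`, `W`, `λ`, and the
resulting function of disjoint pairs of small sets extends uniquely to all pairs.

*Increments.* Suppose that `C` contains `V`, misses `W`, and occupies the proportion `p` of every
atom of `𝒜`. Then `𝒜` and `{C, Cᶜ}` are independent, they remain so after `T_{V,W}`, and `T_{V,W}`
commutes with taking the join. Hence the increment on the join at the atoms `A₁ ∩ C`, `A₂ ∩ Cᶜ` is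
the sum of the two increments, while the ratios `λ` and `(1 - p)/p` multiply (`memF.incr_join`). By
the Darboux property such sets `C` exist as soon as `V` and `W` are small (`IsFinPart.exists_prop`).
For ratio `1` the increment vanishes (`memF.incr_one`). For general `λ` and `𝒜, ℬ ∈ F_λ(V,W)`, a set
`C` occupying the same proportion of every atom of `𝒜 ∨ ℬ`, with `(1 - p)/p = 1/λ`, cancels both
increments, so they agree (`memF.incr_eq_of_small`). The smallness assumption is removed by
carrying out an exchange as two successive exchanges of halves (`memF.incr_eq`).

*Extension.* On small pairwise disjoint sets the common value `delta0` is a cocycle and is additive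
on disjoint unions, since suitable partitions in `F_λ` exist and exchanges compose. It extends to
all small pairs by `D(V,W) = d(V,U) + d(U,W)` for any small `U` disjoint from both
(`PreCocycle.exists_cocycle`), and then to pairs of twice the size by summing over halves
(`Cocycle.double`), hence to all pairs. Conversely, an additive cocycle is determined by its values
on small disjoint pairs (`Cocycle.unique`). This gives uniqueness of `Δ`, and also the
multiplicativity in `λ`: the sum of the cocycles for `κ` and `λ` agrees with the cocycle for `κλ` on
small disjoint pairs, by `memF.incr_join` applied to a pair of two-atom partitions.
-/


open MeasureTheory Filter Topology

namespace APE

variable {Ω : Type*} [MeasurableSpace Ω]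

/-- A finite measurable partition of `Ω`: a finite collection of nonempty pairwise
disjoint measurable sets whose union is `Ω`. -/
def IsFinPart (𝒜 : Finset (Set Ω)) : Prop :=
  (∀ A ∈ 𝒜, MeasurableSet A) ∧ (∀ A ∈ 𝒜, A ≠ ∅) ∧
    (𝒜 : Set (Set Ω)).PairwiseDisjoint id ∧ ⋃₀ (𝒜 : Set (Set Ω)) = Set.univ

/-- The join (common refinement) `𝒜 ∨ ℬ` of two finite partitions. -/
noncomputable def join (𝒜 ℬ : Finset (Set Ω)) : Finset (Set Ω) := by
  classical
  exact ((𝒜 ×ˢ ℬ).image fun p => p.1 ∩ p.2).filter fun s => s ≠ ∅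

/-- Stochastic independence `𝒜 ⊥ ℬ` of two finite partitions. -/
def Indep (P : Measure Ω) (𝒜 ℬ : Finset (Set Ω)) : Prop :=
  ∀ A ∈ 𝒜, ∀ B ∈ ℬ, P (A ∩ B) = P A * P B

/-- An additive partition entropy: `I (𝒜·ℬ) = I 𝒜 + I ℬ` for independent partitions. -/
def IsAPE (P : Measure Ω) (I : Finset (Set Ω) → ℝ) : Prop :=
  ∀ 𝒜 ℬ : Finset (Set Ω), IsFinPart 𝒜 → IsFinPart ℬ → Indep P 𝒜 ℬ →
    I (join 𝒜 ℬ) = I 𝒜 + I ℬ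

/-- Restriction `𝒜|S` of a partition to a set `S`. -/
noncomputable def restr (𝒜 : Finset (Set Ω)) (S : Set Ω) : Finset (Set Ω) := by
  classical
  exact (𝒜.image fun A => A ∩ S).filter fun s => s ≠ ∅

/-- The number `N(𝒜)` of atoms of positive measure. -/
noncomputable def numPos (P : Measure Ω) (𝒜 : Finset (Set Ω)) : ℕ := by
  classical
  exact (𝒜.filter fun A => 0 < P A).card

/-- The pseudometric `D` on finite partitions. -/
noncomputable def Ddist (P : Measure Ω) (𝒜 ℬ : Finset (Set Ω)) : ℝ :=
  sInf ((fun Z => (P Z).toReal) ''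
      {Z : Set Ω | MeasurableSet Z ∧ restr 𝒜 Zᶜ = restr ℬ Zᶜ}) +
    |(numPos P 𝒜 : ℝ) - (numPos P ℬ : ℝ)|

/-- Continuity of `I` with respect to the pseudometric `D`. -/
def CtsD (P : Measure Ω) (I : Finset (Set Ω) → ℝ) : Prop :=
  ∀ 𝒜 : Finset (Set Ω), IsFinPart 𝒜 → ∀ ε : ℝ, 0 < ε → ∃ δ : ℝ, 0 < δ ∧
    ∀ ℬ : Finset (Set Ω), IsFinPart ℬ → Ddist P 𝒜 ℬ < δ → |I ℬ - I 𝒜| < ε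

/-- The two-atom partition `{A, Ω ∖ A}`. -/
noncomputable def twoPart (A : Set Ω) : Finset (Set Ω) := by
  classical
  exact {A, Aᶜ}

/-- Continuity of `I` on the family `𝔄₂` of two-atom partitions. -/
def CtsOnA2 (P : Measure Ω) (I : Finset (Set Ω) → ℝ) : Prop :=
  ∀ (A : Set Ω) (As : ℕ → Set Ω), MeasurableSet A → (∀ n, MeasurableSet (As n)) →
    0 < P A → P A < 1 →
    Tendsto (fun n => (P (symmDiff A (As n))).toReal) atTop (𝓝 0) →
    Tendsto (fun n => I (twoPart (As n))) atTop (𝓝 (I (twoPart A)))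

/-- The Darboux property of a measure. -/
def Darboux (P : Measure Ω) : Prop :=
  ∀ A : Set Ω, MeasurableSet A → ∀ θ : ENNReal, 0 < θ → θ < P A →
    ∃ B : Set Ω, MeasurableSet B ∧ B ⊆ A ∧ P B = θ

/-- Nonatomicity of a measure. -/
def NonAtomic (P : Measure Ω) : Prop :=
  ∀ A : Set Ω, MeasurableSet A → 0 < P A →
    ∃ B : Set Ω, MeasurableSet B ∧ B ⊆ A ∧ 0 < P B ∧ P B < P A

/-- A finitely additive real set function on measurable sets. -/
def FinAdd (m : Set Ω → ℝ) : Prop :=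
  ∀ A B : Set Ω, MeasurableSet A → MeasurableSet B → Disjoint A B →
    m (A ∪ B) = m A + m B

/-- A countably additive real set function on measurable sets. -/
def CountAdd (m : Set Ω → ℝ) : Prop :=
  ∀ f : ℕ → Set Ω, (∀ n, MeasurableSet (f n)) →
    (∀ i j, i ≠ j → Disjoint (f i) (f j)) →
    HasSum (fun n => m (f n)) (m (⋃ n, f n))

/-- Absolute continuity of `m` with respect to `P`. -/
def AbsCont (P : Measure Ω) (m : Set Ω → ℝ) : Prop :=
  ∀ ε : ℝ, 0 < ε → ∃ δ : ℝ, 0 < δ ∧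
    ∀ A : Set Ω, MeasurableSet A → (P A).toReal < δ → |m A| < ε

/-- The entropy `L_m(𝒜) = Σ_{A∈𝒜} m(A)·log₂(1/P(A))`.  (If `P A = 0` then the
corresponding term vanishes: `m A = 0` for `m` vanishing on null sets, which
implements the convention `0·(+∞) = 0`.) -/
noncomputable def Lm (P : Measure Ω) (m : Set Ω → ℝ) (𝒜 : Finset (Set Ω)) : ℝ :=
  ∑ A ∈ 𝒜, m A * Real.logb 2 (1 / (P A).toReal)

/-- Two partitions have the same measures of atoms. -/
def SameMeasures (P : Measure Ω) (𝒜 ℬ : Finset (Set Ω)) : Prop :=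
  ∃ e : {A : Set Ω // A ∈ 𝒜} ≃ {B : Set Ω // B ∈ ℬ}, ∀ A, P (e A).1 = P A.1

/-- `I` depends solely on the measures of atoms. -/
def DependsOnMeasures (P : Measure Ω) (I : Finset (Set Ω) → ℝ) : Prop :=
  ∀ 𝒜 ℬ : Finset (Set Ω), IsFinPart 𝒜 → IsFinPart ℬ → SameMeasures P 𝒜 ℬ → I 𝒜 = I ℬ

/-- The operation `T_{V,W}`, replacing the atom `A₁ ⊇ V` by `(A₁∖V)∪W` and the atom
`A₂ ⊇ W` by `(A₂∖W)∪V`. -/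
noncomputable def swap (V W A₁ A₂ : Set Ω) (𝒜 : Finset (Set Ω)) : Finset (Set Ω) := by
  classical
  exact insert ((A₁ \ V) ∪ W) (insert ((A₂ \ W) ∪ V) ((𝒜.erase A₁).erase A₂))

/-- `ε(λ) = min (1/(1+λ)) (1/(1+λ⁻¹))`. -/
noncomputable def epsFun (lam : ℝ) : ℝ := min (1 / (1 + lam)) (1 / (1 + lam⁻¹))

/-- An indexed finite measurable partition. -/
def IsPartIdx {n : ℕ} (A : Fin n → Set Ω) : Prop :=
  (∀ i, MeasurableSet (A i)) ∧ (∀ i, A i ≠ ∅) ∧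
    (∀ i j, i ≠ j → Disjoint (A i) (A j)) ∧ (⋃ i, A i) = Set.univ

/-- The finset of atoms of an indexed partition. -/
noncomputable def idxFinset {n : ℕ} (A : Fin n → Set Ω) : Finset (Set Ω) := by
  classical
  exact Finset.univ.image A

/-- The two-atom family `{A, B}`. -/
noncomputable def pairPart (A B : Set Ω) : Finset (Set Ω) := by
  classical
  exact {A, B}

/-- Membership of `𝒜` in `F_λ(V,W)`, with designated distinct atoms `A₁ ⊇ V`,
`A₂ ⊇ W` such that `P(A₂)/P(A₁) = λ`. -/
def memF (P : Measure Ω) (V W : Set Ω) (lam : ℝ) (𝒜 : Finset (Set Ω))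
    (A₁ A₂ : Set Ω) : Prop :=
  IsFinPart 𝒜 ∧ A₁ ∈ 𝒜 ∧ A₂ ∈ 𝒜 ∧ A₁ ≠ A₂ ∧ V ⊆ A₁ ∧ W ⊆ A₂ ∧
    (P A₂).toReal / (P A₁).toReal = lam

/-- Measurable sets with rational measure. -/
def InRat (P : Measure Ω) (A : Set Ω) : Prop :=
  MeasurableSet A ∧ ∃ q : ℚ, (P A).toReal = (q : ℝ)

/-- The characteristic properties of `Δ(V,W,λ)` associated with an additive
partition entropy `I` (Proposition 3 of the paper). -/
def DeltaSpec (P : Measure Ω) (I : Finset (Set Ω) → ℝ)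
    (Δ : Set Ω → Set Ω → ℝ → ℝ) : Prop :=
  (∀ V W : Set Ω, ∀ lam : ℝ, MeasurableSet V → MeasurableSet W → P V = P W →
      0 < lam → Disjoint V W →
      ∀ 𝒜 A₁ A₂, memF P V W lam 𝒜 A₁ A₂ →
        Δ V W lam = I (swap V W A₁ A₂ 𝒜) - I 𝒜) ∧
  (∀ U V W : Set Ω, ∀ lam : ℝ, MeasurableSet U → MeasurableSet V → MeasurableSet W →
      P U = P V → P V = P W → 0 < lam →
      Δ U W lam = Δ U V lam + Δ V W lam) ∧
  (∀ V₁ V₂ W₁ W₂ : Set Ω, ∀ lam : ℝ, MeasurableSet V₁ → MeasurableSet V₂ →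
      MeasurableSet W₁ → MeasurableSet W₂ → Disjoint V₁ V₂ → Disjoint W₁ W₂ →
      P V₁ = P W₁ → P V₂ = P W₂ → 0 < lam →
      Δ (V₁ ∪ V₂) (W₁ ∪ W₂) lam = Δ V₁ W₁ lam + Δ V₂ W₂ lam) ∧
  (∀ V W : Set Ω, ∀ kap lam : ℝ, MeasurableSet V → MeasurableSet W → P V = P W →
      0 < kap → 0 < lam →
      Δ V W (kap * lam) = Δ V W kap + Δ V W lam)

/-! ### Measures of sets -/

set_option linter.unusedSectionVars false

section Measure

variable {P : Measure Ω} [IsProbabilityMeasure P]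

/-- The Darboux property in its interpolation form: every value between `P V` and `P X` is the
measure of a set between `V` and `X`. -/
lemma Darboux.between (hD : Darboux P) {V X : Set Ω} (hV : MeasurableSet V)
    (hX : MeasurableSet X) (hVX : V ⊆ X) {θ : ℝ} (h1 : P.real V ≤ θ) (h2 : θ ≤ P.real X) :
    ∃ B, MeasurableSet B ∧ V ⊆ B ∧ B ⊆ X ∧ P.real B = θ := by
  rcases h1.eq_or_lt with h1 | h1
  · exact ⟨V, hV, subset_rfl, hVX, h1⟩
  rcases h2.eq_or_lt with h2 | h2
  · exact ⟨X, hX, hVX, subset_rfl, h2.symm⟩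
  have hdiff : P.real (X \ V) = P.real X - P.real V := measureReal_sdiff hVX hV
  obtain ⟨B, hB, hBX, hPB⟩ := hD (X \ V) (hX.diff hV) (ENNReal.ofReal (θ - P.real V))
    (by simpa using h1) (by
      rw [← ofReal_measureReal (μ := P) (s := X \ V), ENNReal.ofReal_lt_ofReal_iff (by linarith)]
      linarith)
  have hPB' : P.real B = θ - P.real V := by
    rw [Measure.real, hPB, ENNReal.toReal_ofReal (by linarith)]
  refine ⟨V ∪ B, hV.union hB, Set.subset_union_left,
    Set.union_subset hVX (hBX.trans Set.sdiff_subset), ?_⟩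
  rw [measureReal_union (Set.disjoint_left.2 fun x hx hxB => (hBX hxB).2 hx) hB, hPB']
  ring

/-- A measurable set contains a measurable subset of half its measure. -/
lemma Darboux.half (hD : Darboux P) {V : Set Ω} (hV : MeasurableSet V) :
    ∃ B, MeasurableSet B ∧ B ⊆ V ∧ P.real B = P.real V / 2 ∧ P.real (V \ B) = P.real V / 2 := by
  obtain ⟨B, hB, -, hBV, h⟩ := hD.between MeasurableSet.empty hV (Set.empty_subset _)
    (θ := P.real V / 2) (by rw [measureReal_empty]; positivity)
    (by linarith [measureReal_nonneg (μ := P) (s := V)])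
  exact ⟨B, hB, hBV, h, by rw [measureReal_sdiff hBV hB, h]; ring⟩

/-- Moving a set of equal measure in for one moved out does not change the measure. -/
lemma real_exchange {A V W : Set Ω} (hV : MeasurableSet V) (hW : MeasurableSet W)
    (hVA : V ⊆ A) (hWA : Disjoint W A) (h : P.real V = P.real W) :
    P.real (A \ V ∪ W) = P.real A := by
  rw [measureReal_union (hWA.symm.mono_left Set.sdiff_subset) hW, measureReal_sdiff hVA hV, h]
  ring

end Measure

/-! ### Finite partitions -/

section Partition

variable {P : Measure Ω} {𝒜 ℬ : Finset (Set Ω)} {V W A₁ A₂ s C : Set Ω} {lam : ℝ}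

lemma mem_join : s ∈ join 𝒜 ℬ ↔ (∃ A ∈ 𝒜, ∃ B ∈ ℬ, A ∩ B = s) ∧ s ≠ ∅ := by
  classical
  simp [join, and_assoc]

lemma mem_swap : s ∈ swap V W A₁ A₂ 𝒜 ↔
    s = A₁ \ V ∪ W ∨ s = A₂ \ W ∪ V ∨ (s ∈ 𝒜 ∧ s ≠ A₁ ∧ s ≠ A₂) := by
  classical
  simp only [swap, Finset.mem_insert, Finset.mem_erase]
  tauto

lemma mem_twoPart : s ∈ twoPart C ↔ s = C ∨ s = Cᶜ := by
  classical
  simp [twoPart]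

lemma IsFinPart.eq_of_mem (h : IsFinPart 𝒜) {A B : Set Ω} (hA : A ∈ 𝒜) (hB : B ∈ 𝒜) {x : Ω}
    (hxA : x ∈ A) (hxB : x ∈ B) : A = B := by
  by_contra hne
  exact Set.disjoint_left.1 (h.2.2.1 hA hB hne) hxA hxB

lemma IsFinPart.exists_mem (h : IsFinPart 𝒜) (x : Ω) : ∃ A ∈ 𝒜, x ∈ A := by
  have : x ∈ ⋃₀ (𝒜 : Set (Set Ω)) := h.2.2.2 ▸ Set.mem_univ x
  simpa using this

lemma isFinPart_of (h1 : ∀ A ∈ 𝒜, MeasurableSet A) (h2 : ∀ A ∈ 𝒜, A ≠ ∅)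
    (h3 : ∀ A ∈ 𝒜, ∀ B ∈ 𝒜, ∀ x, x ∈ A → x ∈ B → A = B) (h4 : ∀ x, ∃ A ∈ 𝒜, x ∈ A) :
    IsFinPart 𝒜 := by
  refine ⟨h1, h2, fun A hA B hB hne => Set.disjoint_left.2 fun x hx hx' =>
    hne (h3 A hA B hB x hx hx'), Set.eq_univ_of_forall fun x => ?_⟩
  simpa using h4 x

/-- Inclusion between two partitions forces equality, since the atoms are nonempty. -/
lemma IsFinPart.eq_of_subset (hA : IsFinPart 𝒜) (hB : IsFinPart ℬ) (h : 𝒜 ⊆ ℬ) : 𝒜 = ℬ := by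
  refine h.antisymm fun B hB' => ?_
  obtain ⟨x, hx⟩ := Set.nonempty_iff_ne_empty.2 (hB.2.1 B hB')
  obtain ⟨A, hA', hxA⟩ := hA.exists_mem x
  rwa [← hB.eq_of_mem (h hA') hB' hxA hx]

lemma IsFinPart.join (hA : IsFinPart 𝒜) (hB : IsFinPart ℬ) : IsFinPart (join 𝒜 ℬ) := by
  refine isFinPart_of ?_ (fun s hs => (mem_join.1 hs).2) ?_ fun x => ?_
  · intro s hs
    obtain ⟨⟨A, hA', B, hB', rfl⟩, -⟩ := mem_join.1 hs
    exact (hA.1 A hA').inter (hB.1 B hB')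
  · intro s hs t ht x hx hx'
    obtain ⟨⟨A, hA', B, hB', rfl⟩, -⟩ := mem_join.1 hs
    obtain ⟨⟨A', hA'', B', hB'', rfl⟩, -⟩ := mem_join.1 ht
    rw [hA.eq_of_mem hA' hA'' hx.1 hx'.1, hB.eq_of_mem hB' hB'' hx.2 hx'.2]
  · obtain ⟨A, hA', hxA⟩ := hA.exists_mem x
    obtain ⟨B, hB', hxB⟩ := hB.exists_mem x
    exact ⟨A ∩ B, mem_join.2 ⟨⟨A, hA', B, hB', rfl⟩, Set.nonempty_iff_ne_empty.1 ⟨x, hxA, hxB⟩⟩,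
      hxA, hxB⟩

lemma isFinPart_twoPart (hC : MeasurableSet C) (h1 : C.Nonempty) (h2 : Cᶜ.Nonempty) :
    IsFinPart (twoPart C) := by
  refine isFinPart_of ?_ ?_ ?_ ?_ <;> simp only [mem_twoPart]
  · rintro A (rfl | rfl)
    exacts [hC, hC.compl]
  · rintro A (rfl | rfl)
    exacts [h1.ne_empty, h2.ne_empty]
  · rintro A (rfl | rfl) B (rfl | rfl) x hx hx' <;> simp_all
  · intro x
    by_cases hx : x ∈ C
    exacts [⟨C, Or.inl rfl, hx⟩, ⟨Cᶜ, Or.inr rfl, hx⟩]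

lemma IsFinPart.real_eq_sum [IsProbabilityMeasure P] (h : IsFinPart 𝒜) {X : Set Ω}
    (hX : MeasurableSet X) : P.real X = ∑ A ∈ 𝒜, P.real (X ∩ A) := by
  rw [← measureReal_biUnion_finset]
  · congr 1
    ext x
    obtain ⟨A, hA, hx⟩ := h.exists_mem x
    simp only [Set.mem_iUnion, Set.mem_inter_iff]
    exact ⟨fun hxX => ⟨A, hA, hxX, hx⟩, fun ⟨_, _, hxX, _⟩ => hxX⟩
  · intro A hA B hB hne
    exact (h.2.2.1 hA hB hne).mono Set.inter_subset_right Set.inter_subset_right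
  · exact fun A hA => hX.inter (h.1 A hA)

/-- A set occupying the same proportion `p` of every atom has measure `p`. -/
lemma IsFinPart.real_of_prop [IsProbabilityMeasure P] (h : IsFinPart 𝒜) (hC : MeasurableSet C)
    {p : ℝ} (hp : ∀ A ∈ 𝒜, P.real (C ∩ A) = p * P.real A) : P.real C = p := by
  have h1 := h.real_eq_sum (P := P) MeasurableSet.univ
  simp only [Set.univ_inter, probReal_univ] at h1
  rw [h.real_eq_sum hC, Finset.sum_congr rfl hp, ← Finset.mul_sum, ← h1, mul_one]

/-- A set occupying the same proportion `p` of every atom of `𝒜 ∨ ℬ` does so on `𝒜`. -/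
lemma IsFinPart.prop_of_join [IsProbabilityMeasure P] (hA : IsFinPart 𝒜) (hB : IsFinPart ℬ)
    (hC : MeasurableSet C) {p : ℝ}
    (hp : ∀ A ∈ 𝒜, ∀ B ∈ ℬ, P.real (C ∩ (A ∩ B)) = p * P.real (A ∩ B)) :
    ∀ A ∈ 𝒜, P.real (C ∩ A) = p * P.real A := by
  intro A hA'
  rw [hB.real_eq_sum (hC.inter (hA.1 A hA')), hB.real_eq_sum (hA.1 A hA'), Finset.mul_sum]
  exact Finset.sum_congr rfl fun B hB' => by rw [Set.inter_assoc, hp A hA' B hB']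

/-- Sets with a prescribed proportion: between `L` and `U` there is a set occupying the proportion
`p` of every atom, as soon as each atom leaves room for it. -/
lemma IsFinPart.exists_prop [IsProbabilityMeasure P] (hD : Darboux P) (h : IsFinPart 𝒜)
    {L U : Set Ω} (hL : MeasurableSet L) (hU : MeasurableSet U) (hLU : L ⊆ U) {p : ℝ}
    (h1 : ∀ A ∈ 𝒜, P.real (L ∩ A) ≤ p * P.real A)
    (h2 : ∀ A ∈ 𝒜, p * P.real A ≤ P.real (U ∩ A)) :
    ∃ C, MeasurableSet C ∧ L ⊆ C ∧ C ⊆ U ∧ ∀ A ∈ 𝒜, P.real (C ∩ A) = p * P.real A := by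
  have key : ∀ A, ∃ B, A ∈ 𝒜 → MeasurableSet B ∧ L ∩ A ⊆ B ∧ B ⊆ U ∩ A ∧
      P.real B = p * P.real A := by
    intro A
    by_cases hA : A ∈ 𝒜
    · obtain ⟨B, hB⟩ := hD.between (hL.inter (h.1 A hA)) (hU.inter (h.1 A hA))
        (Set.inter_subset_inter_left _ hLU) (h1 A hA) (h2 A hA)
      exact ⟨B, fun _ => hB⟩
    · exact ⟨∅, fun h => (hA h).elim⟩
  choose f hf using key
  refine ⟨⋃ A ∈ 𝒜, f A, Finset.measurableSet_biUnion _ fun A hA => (hf A hA).1, ?_, ?_, ?_⟩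
  · intro x hx
    obtain ⟨A, hA, hxA⟩ := h.exists_mem x
    exact Set.mem_biUnion hA ((hf A hA).2.1 ⟨hx, hxA⟩)
  · exact Set.iUnion₂_subset fun A hA => (hf A hA).2.2.1.trans Set.inter_subset_left
  · intro A hA
    rw [← (hf A hA).2.2.2]
    congr 1
    ext x
    simp only [Set.mem_inter_iff, Set.mem_iUnion]
    constructor
    · rintro ⟨⟨B, hB, hx⟩, hxA⟩
      rwa [h.eq_of_mem hA hB hxA ((hf B hB).2.2.1 hx).2]
    · exact fun hx => ⟨⟨A, hA, hx⟩, ((hf A hA).2.2.1 hx).2⟩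

end Partition

/-! ### The exchange operation `T_{V,W}` -/

/-- `V` and `W` are disjoint measurable sets of equal measure, so that `T_{V,W}` applies to any
partition separating them and preserves the measures of its atoms. -/
structure Exch (P : Measure Ω) (V W : Set Ω) : Prop where
  mV : MeasurableSet V
  mW : MeasurableSet W
  eq : P.real V = P.real W
  disj : Disjoint V W

section Swap

variable {P : Measure Ω} [IsProbabilityMeasure P] {𝒜 ℬ : Finset (Set Ω)}
  {V W V₁ W₁ V₂ W₂ A₁ A₂ B₁ B₂ C : Set Ω} {lam p : ℝ}

lemma Exch.symm (h : Exch P V W) : Exch P W V := ⟨h.mW, h.mV, h.eq.symm, h.disj.symm⟩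

lemma memF.pos_left (h : memF P V W lam 𝒜 A₁ A₂) (hl : 0 < lam) : 0 < P.real A₁ := by
  obtain ⟨-, -, -, -, -, -, h⟩ := h
  refine measureReal_nonneg.lt_of_ne fun h0 => ?_
  change P.real A₂ / P.real A₁ = lam at h
  rw [← h0, div_zero] at h
  exact hl.ne h

lemma memF.right_eq (h : memF P V W lam 𝒜 A₁ A₂) (hl : 0 < lam) :
    P.real A₂ = lam * P.real A₁ := by
  have := (h.pos_left hl).ne'
  obtain ⟨-, -, -, -, -, -, h⟩ := h
  rw [← h]
  change _ = P.real A₂ / P.real A₁ * P.real A₁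
  field_simp

lemma memF.disjoint (h : memF P V W lam 𝒜 A₁ A₂) : Disjoint A₁ A₂ :=
  h.1.2.2.1 h.2.1 h.2.2.1 h.2.2.2.1

lemma memF.real_left (h : memF P V W lam 𝒜 A₁ A₂) (e : Exch P V W) :
    P.real (A₁ \ V ∪ W) = P.real A₁ :=
  real_exchange e.mV e.mW h.2.2.2.2.1 (h.disjoint.symm.mono_left h.2.2.2.2.2.1) e.eq

lemma memF.real_right (h : memF P V W lam 𝒜 A₁ A₂) (e : Exch P V W) :
    P.real (A₂ \ W ∪ V) = P.real A₂ :=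
  real_exchange e.mW e.mV h.2.2.2.2.2.1 (h.disjoint.mono_left h.2.2.2.2.1) e.eq.symm

lemma memF.cases (h : memF P V W lam 𝒜 A₁ A₂) {A : Set Ω} (hA : A ∈ 𝒜) :
    A = A₁ ∨ A = A₂ ∨ A ≠ A₁ ∧ A ≠ A₂ ∧ (∀ x ∈ A, x ∉ A₁) ∧ (∀ x ∈ A, x ∉ A₂) := by
  by_cases h1 : A = A₁
  · exact Or.inl h1
  by_cases h2 : A = A₂
  · exact Or.inr (Or.inl h2)
  exact Or.inr (Or.inr ⟨h1, h2, fun x hx hx' => h1 (h.1.eq_of_mem hA h.2.1 hx hx'),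
    fun x hx hx' => h2 (h.1.eq_of_mem hA h.2.2.1 hx hx')⟩)

lemma memF.isFinPart_swap (h : memF P V W lam 𝒜 A₁ A₂) (hl : 0 < lam) (e : Exch P V W) :
    IsFinPart (swap V W A₁ A₂ 𝒜) := by
  have n1 : (A₁ \ V ∪ W) ≠ ∅ := by
    intro h0
    have := h.real_left e
    rw [h0, measureReal_empty] at this
    exact (h.pos_left hl).ne this
  have n2 : (A₂ \ W ∪ V) ≠ ∅ := by
    intro h0
    have h1 := h.real_right e
    rw [h0, measureReal_empty, h.right_eq hl] at h1
    exact (mul_pos hl (h.pos_left hl)).ne h1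
  have hd := Set.disjoint_left.1 h.disjoint
  have hVW := Set.disjoint_left.1 e.disj
  obtain ⟨hF, m1, m2, -, hV, hW, -⟩ := id h
  refine isFinPart_of ?_ ?_ ?_ ?_ <;> simp only [mem_swap]
  · rintro A (rfl | rfl | ⟨hA, -, -⟩)
    exacts [((hF.1 _ m1).diff e.mV).union e.mW, ((hF.1 _ m2).diff e.mW).union e.mV, hF.1 _ hA]
  · rintro A (rfl | rfl | ⟨hA, -, -⟩)
    exacts [n1, n2, hF.2.1 _ hA]
  · rintro A hA B hB x hxA hxB
    have hA' : ∀ A ∈ 𝒜, x ∈ A → A ≠ A₁ → A ≠ A₂ → x ∉ A₁ ∧ x ∉ A₂ := fun A hA hx h1 h2 =>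
      ⟨fun hx' => h1 (hF.eq_of_mem hA m1 hx hx'), fun hx' => h2 (hF.eq_of_mem hA m2 hx hx')⟩
    have hB' := @hV x
    have hB'' := @hW x
    have := @hd x
    have := @hVW x
    rcases hA with rfl | rfl | ⟨hA, hA1, hA2⟩ <;> rcases hB with rfl | rfl | ⟨hB, hB1, hB2⟩
    · rfl
    · simp only [Set.mem_union, Set.mem_sdiff] at hxA hxB; tauto
    · have := hA' B hB hxB hB1 hB2
      simp only [Set.mem_union, Set.mem_sdiff] at hxA; tauto
    · simp only [Set.mem_union, Set.mem_sdiff] at hxA hxB; tauto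
    · rfl
    · have := hA' B hB hxB hB1 hB2
      simp only [Set.mem_union, Set.mem_sdiff] at hxA; tauto
    · have := hA' A hA hxA hA1 hA2
      simp only [Set.mem_union, Set.mem_sdiff] at hxB; tauto
    · have := hA' A hA hxA hA1 hA2
      simp only [Set.mem_union, Set.mem_sdiff] at hxB; tauto
    · exact hF.eq_of_mem hA hB hxA hxB
  · intro x
    by_cases h1 : x ∈ A₁ \ V ∪ W
    · exact ⟨_, Or.inl rfl, h1⟩
    by_cases h2 : x ∈ A₂ \ W ∪ V
    · exact ⟨_, Or.inr (Or.inl rfl), h2⟩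
    obtain ⟨A, hA, hx⟩ := hF.exists_mem x
    refine ⟨A, Or.inr (Or.inr ⟨hA, ?_, ?_⟩), hx⟩ <;> rintro rfl <;>
      simp only [Set.mem_union, Set.mem_sdiff] at h1 h2 <;> tauto

/-- Exchanging preserves the ratio of the two designated atoms. -/
lemma memF.step (h : memF P V W lam 𝒜 A₁ A₂) (hl : 0 < lam) (e : Exch P V W)
    (hV : V₂ ⊆ A₁ \ V ∪ W) (hW : W₂ ⊆ A₂ \ W ∪ V) :
    memF P V₂ W₂ lam (swap V W A₁ A₂ 𝒜) (A₁ \ V ∪ W) (A₂ \ W ∪ V) := by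
  have hF := h.isFinPart_swap hl e
  refine ⟨hF, mem_swap.2 (Or.inl rfl), mem_swap.2 (Or.inr (Or.inl rfl)), ?_, hV, hW, ?_⟩
  · intro h0
    obtain ⟨x, hx⟩ := Set.nonempty_iff_ne_empty.2 (hF.2.1 _ (mem_swap.2 (Or.inl rfl)))
    have hx' := h0 ▸ hx
    have h1 := @h.2.2.2.2.1 x
    have h2 := @h.2.2.2.2.2.1 x
    have hd := Set.disjoint_left.1 h.disjoint
    have hVW := Set.disjoint_left.1 e.disj
    have h3 := @hd x
    have h4 := @hVW x
    simp only [Set.mem_union, Set.mem_sdiff] at hx hx'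
    tauto
  · have h1 := h.real_left e
    have h2 := h.real_right e
    change P.real _ / P.real _ = _
    rw [h1, h2]
    exact h.2.2.2.2.2.2

/-- Two successive exchanges between the same two atoms amount to a single one when the resulting
atoms agree. -/
lemma memF.swap_swap (h : memF P V W lam 𝒜 A₁ A₂) (h1 : (A₁ \ V ∪ W) \ V₁ ∪ W₁ = A₁ \ V₂ ∪ W₂)
    (h2 : (A₂ \ W ∪ V) \ W₁ ∪ V₁ = A₂ \ W₂ ∪ V₂) :
    swap V₁ W₁ (A₁ \ V ∪ W) (A₂ \ W ∪ V) (swap V W A₁ A₂ 𝒜) = swap V₂ W₂ A₁ A₂ 𝒜 := by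
  ext s
  simp only [mem_swap, h1, h2]
  refine or_congr_right (or_congr_right ⟨by tauto, fun hs => ?_⟩)
  refine ⟨Or.inr (Or.inr hs), ?_⟩
  obtain ⟨x, hx⟩ := Set.nonempty_iff_ne_empty.2 (h.1.2.1 s hs.1)
  have hc := h.cases hs.1
  have hV := @h.2.2.2.2.1 x
  have hW := @h.2.2.2.2.2.1 x
  have h3 : x ∉ A₁ ∧ x ∉ A₂ := by
    rcases hc with hc | hc | hc
    exacts [(hs.2.1 hc).elim, (hs.2.2 hc).elim, ⟨hc.2.2.1 x hx, hc.2.2.2 x hx⟩]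
  constructor <;> rintro rfl <;> simp only [Set.mem_union, Set.mem_sdiff] at hx <;> tauto

lemma memF.swap_eq_self (h : memF P V W lam 𝒜 A₁ A₂) (hl : 0 < lam) (e : Exch P V W)
    (h1 : A₁ \ V ∪ W ∈ 𝒜) (h2 : A₂ \ W ∪ V ∈ 𝒜) : swap V W A₁ A₂ 𝒜 = 𝒜 := by
  refine (h.isFinPart_swap hl e).eq_of_subset h.1 fun s hs => ?_
  rcases mem_swap.1 hs with rfl | rfl | hs
  exacts [h1, h2, hs.1]

end Swap

/-! ### Well-definedness of the increment -/

section Increment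

variable {P : Measure Ω} [IsProbabilityMeasure P] {I : Finset (Set Ω) → ℝ}
  {𝒜 ℬ : Finset (Set Ω)} {V W A₁ A₂ B₁ B₂ C : Set Ω} {lam p : ℝ}

/-- The increment `I(T_{V,W}𝒜) − I(𝒜)`. -/
noncomputable def incr (I : Finset (Set Ω) → ℝ) (V W A₁ A₂ : Set Ω) (𝒜 : Finset (Set Ω)) : ℝ :=
  I (swap V W A₁ A₂ 𝒜) - I 𝒜

/-- Additivity of `I` for a join with a two-atom partition `{C, Ω ∖ C}`, when `C` occupies the
proportion `p` of every atom of `𝒜`. -/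
lemma IsAPE.join_twoPart (hI : IsAPE P I) (hA : IsFinPart 𝒜) (hC : MeasurableSet C)
    (h1 : C.Nonempty) (h2 : Cᶜ.Nonempty) (hp : ∀ A ∈ 𝒜, P.real (C ∩ A) = p * P.real A) :
    I (join 𝒜 (twoPart C)) = I 𝒜 + I (twoPart C) := by
  have hPC : P.real C = p := hA.real_of_prop hC hp
  refine hI _ _ hA (isFinPart_twoPart hC h1 h2) fun A hA' B hB => ?_
  have key : P.real (A ∩ B) = P.real A * P.real B := by
    have h3 : P.real (A ∩ C) = p * P.real A := by rw [Set.inter_comm, hp A hA']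
    rcases mem_twoPart.1 hB with rfl | rfl
    · rw [h3, hPC, mul_comm]
    · rw [probReal_compl_eq_one_sub hC, hPC, ← Set.sdiff_eq]
      have := measureReal_inter_add_sdiff (μ := P) (s := A) hC
      linarith
  rw [Measure.real, Measure.real, Measure.real, ← ENNReal.toReal_mul] at key
  exact (ENNReal.toReal_eq_toReal_iff' (by finiteness) (by finiteness)).1 key

/-- Between atoms of equal measure an exchange does not change `I`: a two-atom partition `{C, Ω ∖ C}`
independent of both `𝒜` and `T_{V,W}𝒜`, with `C` cutting out exactly `V` and `W` from the two
designated atoms, has the same join with either. -/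
lemma memF.incr_one (hD : Darboux P) (hI : IsAPE P I) (h : memF P V W 1 𝒜 A₁ A₂)
    (e : Exch P V W) : incr I V W A₁ A₂ 𝒜 = 0 := by
  have hl : (0 : ℝ) < 1 := one_pos
  have hpos := h.pos_left hl
  have hA2 : P.real A₂ = P.real A₁ := by rw [h.right_eq hl, one_mul]
  obtain ⟨hF, m1, m2, -, hV, hW, -⟩ := id h
  have hd := Set.disjoint_left.1 h.disjoint
  have hVW := Set.disjoint_left.1 e.disj
  rw [incr, sub_eq_zero]
  -- In these two cases `C` might be `∅` or `Ω`, but the exchange does not change `𝒜` at all.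
  by_cases c1 : V ∪ W = ∅
  · obtain ⟨rfl, rfl⟩ := Set.union_empty_iff.1 c1
    rw [h.swap_eq_self hl e] <;> simpa
  by_cases c2 : V = A₁ ∧ W = A₂
  · obtain ⟨rfl, rfl⟩ := c2
    rw [h.swap_eq_self hl e] <;> simpa
  have hcap : ∀ {x}, (x ∈ V → x ∉ A₂ ∧ x ∈ A₁ ∧ x ∉ W) ∧ (x ∈ W → x ∉ A₁ ∧ x ∈ A₂) := by
    intro x
    have h1 := @hV x
    have h2 := @hW x
    have h3 := @hd x
    have h4 := @hVW x
    grind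
  obtain ⟨C, hC, hLC, hCU, hp⟩ := hF.exists_prop (p := P.real V / P.real A₁) hD
    (L := V ∪ W) (U := (A₁ ∪ A₂)ᶜ ∪ (V ∪ W)) (e.mV.union e.mW)
    (((hF.1 _ m1).union (hF.1 _ m2)).compl.union (e.mV.union e.mW)) Set.subset_union_right
    (by
      intro A hA
      rcases h.cases hA with rfl | rfl | ⟨-, -, h1, h2⟩
      · have : (V ∪ W) ∩ A = V := by
          ext x; have := @hcap x; simp only [Set.mem_inter_iff, Set.mem_union]; grind
        rw [this, div_mul_cancel₀ _ hpos.ne']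
      · have : (V ∪ W) ∩ A = W := by
          ext x; have := @hcap x; simp only [Set.mem_inter_iff, Set.mem_union]; grind
        rw [this, hA2, div_mul_cancel₀ _ hpos.ne', e.eq]
      · have : (V ∪ W) ∩ A = ∅ := by
          ext x; have := @hcap x; have := h1 x; have := h2 x
          simp only [Set.mem_inter_iff, Set.mem_union, Set.mem_empty_iff_false]; grind
        rw [this, measureReal_empty]
        positivity)
    (by
      intro A hA
      rcases h.cases hA with rfl | rfl | ⟨-, -, h1, h2⟩
      · rw [div_mul_cancel₀ _ hpos.ne']
        exact measureReal_mono fun x hx => ⟨Or.inr (Or.inl hx), hV hx⟩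
      · rw [hA2, div_mul_cancel₀ _ hpos.ne', e.eq]
        exact measureReal_mono fun x hx => ⟨Or.inr (Or.inr hx), hW hx⟩
      · have : ((A₁ ∪ A₂)ᶜ ∪ (V ∪ W)) ∩ A = A := by
          ext x; have := h1 x; have := h2 x
          simp only [Set.mem_inter_iff, Set.mem_union, Set.mem_compl_iff]; grind
        rw [this]
        exact mul_le_of_le_one_left measureReal_nonneg
          ((div_le_one hpos).2 (measureReal_mono hV)))
  have n1 : C.Nonempty := (Set.nonempty_iff_ne_empty.2 c1).mono hLC
  have n2 : Cᶜ.Nonempty := by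
    rw [Set.nonempty_compl]
    rintro rfl
    refine c2 ⟨hV.antisymm fun x hx => ?_, hW.antisymm fun x hx => ?_⟩ <;>
    · have h1 := hCU (Set.mem_univ x)
      have := @hd x
      have := @hcap x
      simp only [Set.mem_union, Set.mem_compl_iff] at h1
      grind
  have hCiff : ∀ {x}, (x ∈ A₁ → (x ∈ C ↔ x ∈ V)) ∧ (x ∈ A₂ → (x ∈ C ↔ x ∈ W)) := by
    intro x
    have h1 := @hLC x
    have h2 := @hCU x
    have := @hd x
    have := @hcap x
    simp only [Set.mem_union, Set.mem_compl_iff] at h1 h2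
    grind
  have hF' := h.isFinPart_swap hl e
  have s1 : C ∩ (A₁ \ V ∪ W) = W := by
    ext x; have := @hcap x; have := @hCiff x; have := @hd x
    simp only [Set.mem_inter_iff, Set.mem_union, Set.mem_sdiff]; grind
  have s2 : C ∩ (A₂ \ W ∪ V) = V := by
    ext x; have := @hcap x; have := @hCiff x; have := @hd x
    simp only [Set.mem_inter_iff, Set.mem_union, Set.mem_sdiff]; grind
  have hp' : ∀ A ∈ swap V W A₁ A₂ 𝒜, P.real (C ∩ A) = P.real V / P.real A₁ * P.real A := by
    intro A hA
    rcases mem_swap.1 hA with rfl | rfl | ⟨hA, -, -⟩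
    · rw [s1, h.real_left e, div_mul_cancel₀ _ hpos.ne', e.eq]
    · rw [s2, h.real_right e, hA2, div_mul_cancel₀ _ hpos.ne']
    · exact hp A hA
  have e1 := hI.join_twoPart hF hC n1 n2 hp
  have e2 := hI.join_twoPart hF' hC n1 n2 hp'
  have hT := isFinPart_twoPart hC n1 n2
  have : join (swap V W A₁ A₂ 𝒜) (twoPart C) = join 𝒜 (twoPart C) := by
    refine (hF'.join hT).eq_of_subset (hF.join hT) fun s hs => ?_
    obtain ⟨⟨A, hA, B, hB, rfl⟩, hne⟩ := mem_join.1 hs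
    refine mem_join.2 ⟨?_, hne⟩
    have mC : C ∈ twoPart C := mem_twoPart.2 (Or.inl rfl)
    have mC' : Cᶜ ∈ twoPart C := mem_twoPart.2 (Or.inr rfl)
    rcases mem_swap.1 hA with rfl | rfl | ⟨hA, -, -⟩
    · rcases mem_twoPart.1 hB with rfl | rfl
      · refine ⟨A₂, m2, B, mC, ?_⟩
        rw [Set.inter_comm (A₁ \ V ∪ W) B, s1]
        ext x; have := @hcap x; have := @hCiff x
        simp only [Set.mem_inter_iff]; grind
      · refine ⟨A₁, m1, Cᶜ, mC', ?_⟩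
        ext x; have := @hcap x; have := @hCiff x
        simp only [Set.mem_inter_iff, Set.mem_union, Set.mem_sdiff, Set.mem_compl_iff]; grind
    · rcases mem_twoPart.1 hB with rfl | rfl
      · refine ⟨A₁, m1, B, mC, ?_⟩
        rw [Set.inter_comm (A₂ \ W ∪ V) B, s2]
        ext x; have := @hcap x; have := @hCiff x
        simp only [Set.mem_inter_iff]; grind
      · refine ⟨A₂, m2, Cᶜ, mC', ?_⟩
        ext x; have := @hcap x; have := @hCiff x
        simp only [Set.mem_inter_iff, Set.mem_union, Set.mem_sdiff, Set.mem_compl_iff]; grind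
    · exact ⟨A, hA, B, hB, rfl⟩
  rw [this, e1] at e2
  linarith

lemma memF_twoPart (hC : MeasurableSet C) (hVC : V ⊆ C) (hWC : W ⊆ Cᶜ) (h0 : 0 < P.real C)
    (h1 : P.real C < 1) : memF P V W ((1 - P.real C) / P.real C) (twoPart C) C Cᶜ := by
  have n1 : C.Nonempty := nonempty_of_measureReal_ne_zero h0.ne'
  have n2 : Cᶜ.Nonempty := by
    rw [Set.nonempty_compl]
    rintro rfl
    simp at h1
  refine ⟨isFinPart_twoPart hC n1 n2, mem_twoPart.2 (Or.inl rfl), mem_twoPart.2 (Or.inr rfl), ?_,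
    hVC, hWC, ?_⟩
  · intro h
    obtain ⟨x, hx⟩ := n1
    exact (h ▸ hx) hx
  · rw [← probReal_compl_eq_one_sub hC]
    rfl

/-- Joining with an independent two-atom partition multiplies the ratios and adds the
increments. -/
lemma memF.incr_join (hI : IsAPE P I) (h : memF P V W lam 𝒜 A₁ A₂) (hl : 0 < lam)
    (e : Exch P V W) (hC : MeasurableSet C) (hVC : V ⊆ C) (hWC : W ⊆ Cᶜ) (p0 : 0 < p)
    (p1 : p < 1) (hp : ∀ A ∈ 𝒜, P.real (C ∩ A) = p * P.real A) :
    memF P V W (lam * ((1 - p) / p)) (join 𝒜 (twoPart C)) (A₁ ∩ C) (A₂ ∩ Cᶜ) ∧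
    incr I V W (A₁ ∩ C) (A₂ ∩ Cᶜ) (join 𝒜 (twoPart C)) =
      incr I V W A₁ A₂ 𝒜 + incr I V W C Cᶜ (twoPart C) := by
  have hpos := h.pos_left hl
  have hA2 := h.right_eq hl
  obtain ⟨hF, m1, m2, -, hV, hW, -⟩ := id h
  have hPC : P.real C = p := hF.real_of_prop hC hp
  have hT := memF_twoPart (P := P) hC hVC hWC (by rwa [hPC]) (by rwa [hPC])
  have hr : 0 < (1 - P.real C) / P.real C := by
    rw [hPC]; exact div_pos (by linarith) p0
  have hd := Set.disjoint_left.1 h.disjoint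
  have hVW := Set.disjoint_left.1 e.disj
  have r1 : P.real (A₁ ∩ C) = p * P.real A₁ := by rw [Set.inter_comm, hp _ m1]
  have r2 : P.real (A₂ ∩ Cᶜ) = (1 - p) * P.real A₂ := by
    have := measureReal_inter_add_sdiff (μ := P) (s := A₂) hC
    rw [Set.inter_comm, hp _ m2] at this
    rw [← Set.sdiff_eq]
    linarith
  have q1 : 0 < P.real (A₁ ∩ C) := by rw [r1]; positivity
  have q2 : 0 < P.real (A₂ ∩ Cᶜ) := by
    rw [r2, hA2]; exact mul_pos (by linarith) (by positivity)
  have mC : C ∈ twoPart C := mem_twoPart.2 (Or.inl rfl)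
  have mC' : Cᶜ ∈ twoPart C := mem_twoPart.2 (Or.inr rfl)
  have hmem : memF P V W (lam * ((1 - p) / p)) (join 𝒜 (twoPart C)) (A₁ ∩ C) (A₂ ∩ Cᶜ) := by
    refine ⟨hF.join hT.1,
      mem_join.2 ⟨⟨_, m1, _, mC, rfl⟩, (nonempty_of_measureReal_ne_zero q1.ne').ne_empty⟩,
      mem_join.2 ⟨⟨_, m2, _, mC', rfl⟩, (nonempty_of_measureReal_ne_zero q2.ne').ne_empty⟩,
      ?_, Set.subset_inter hV hVC, Set.subset_inter hW hWC, ?_⟩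
    · intro h0
      obtain ⟨x, hx⟩ := nonempty_of_measureReal_ne_zero q1.ne'
      exact (h0 ▸ hx).2 hx.2
    · change P.real _ / P.real _ = _
      rw [r1, r2, hA2]
      field_simp
  refine ⟨hmem, ?_⟩
  -- `T_{V,W}` carries `{C, Ω ∖ C}` to `{D, Ω ∖ D}`.
  set D := C \ V ∪ W with hDdef
  have hcap : ∀ {x}, (x ∈ V → x ∉ A₂ ∧ x ∈ A₁ ∧ x ∈ C ∧ x ∉ W) ∧
      (x ∈ W → x ∉ A₁ ∧ x ∈ A₂ ∧ x ∉ C ∧ x ∉ V) := by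
    intro x
    have h1 := @hV x
    have h2 := @hW x
    have h3 := @hd x
    have h4 := @hVW x
    have h5 := @hVC x
    have h6 := @hWC x
    simp only [Set.mem_compl_iff] at h6
    grind
  have hDc : Dᶜ = Cᶜ \ W ∪ V := by
    ext x
    have := @hcap x
    simp only [hDdef, Set.mem_union, Set.mem_sdiff, Set.mem_compl_iff]
    grind
  have hDT : swap V W C Cᶜ (twoPart C) = twoPart D := by
    ext s
    rw [mem_swap, mem_twoPart, mem_twoPart, hDc]
    grind
  have hPD : P.real D = p := by rw [← hPC]; exact hT.real_left e
  have hDm : MeasurableSet D := (hC.diff e.mV).union e.mW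
  have nD : D.Nonempty := nonempty_of_measureReal_ne_zero (by rw [hPD]; exact p0.ne')
  have nD' : Dᶜ.Nonempty := by
    rw [Set.nonempty_compl]
    intro h0
    rw [h0, probReal_univ] at hPD
    exact p1.ne hPD.symm
  have hF' := h.isFinPart_swap hl e
  have s1 : (A₁ \ V ∪ W) ∩ D = (A₁ ∩ C) \ V ∪ W := by
    ext x
    have := @hcap x
    simp only [hDdef, Set.mem_inter_iff, Set.mem_union, Set.mem_sdiff]
    grind
  have s2 : (A₁ \ V ∪ W) ∩ Dᶜ = A₁ ∩ Cᶜ := by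
    ext x
    have := @hcap x
    simp only [hDdef, Set.mem_inter_iff, Set.mem_union, Set.mem_sdiff, Set.mem_compl_iff]
    grind
  have s3 : (A₂ \ W ∪ V) ∩ D = A₂ ∩ C := by
    ext x
    have := @hcap x
    simp only [hDdef, Set.mem_inter_iff, Set.mem_union, Set.mem_sdiff]
    grind
  have s4 : (A₂ \ W ∪ V) ∩ Dᶜ = (A₂ ∩ Cᶜ) \ W ∪ V := by
    ext x
    have := @hcap x
    simp only [hDdef, Set.mem_inter_iff, Set.mem_union, Set.mem_sdiff, Set.mem_compl_iff]
    grind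
  have s5 : ∀ A ∈ 𝒜, A ≠ A₁ → A ≠ A₂ → A ∩ D = A ∩ C ∧ A ∩ Dᶜ = A ∩ Cᶜ := by
    intro A hA h1 h2
    rcases h.cases hA with h3 | h3 | ⟨-, -, h3, h4⟩
    · exact (h1 h3).elim
    · exact (h2 h3).elim
    constructor <;> ext x <;> have := h3 x <;> have := h4 x <;> have := @hcap x <;>
      simp only [hDdef, Set.mem_inter_iff, Set.mem_union, Set.mem_sdiff, Set.mem_compl_iff] <;>
      grind
  have hp' : ∀ A ∈ swap V W A₁ A₂ 𝒜, P.real (D ∩ A) = p * P.real A := by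
    intro A hA
    rw [Set.inter_comm]
    rcases mem_swap.1 hA with rfl | rfl | ⟨hA, h1, h2⟩
    · rw [s1, hmem.real_left e, h.real_left e, r1]
    · rw [s3, h.real_right e, Set.inter_comm, hp _ m2]
    · rw [(s5 A hA h1 h2).1, Set.inter_comm, hp A hA]
  have hT' := isFinPart_twoPart hDm nD nD'
  have hne : ∀ {X Y : Set Ω}, X ≠ ∅ → (∀ x ∈ X, x ∉ Y) → X ≠ Y := by
    rintro X Y h1 h2 rfl
    obtain ⟨x, hx⟩ := Set.nonempty_iff_ne_empty.2 h1
    exact h2 x hx hx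
  have hjoin : join (swap V W A₁ A₂ 𝒜) (twoPart D) =
      swap V W (A₁ ∩ C) (A₂ ∩ Cᶜ) (join 𝒜 (twoPart C)) := by
    refine (hF'.join hT').eq_of_subset
      (hmem.isFinPart_swap (mul_pos hl (by rwa [← hPC])) e) fun s hs => ?_
    obtain ⟨⟨A, hA, B, hB, rfl⟩, h0⟩ := mem_join.1 hs
    rw [mem_swap, mem_join]
    rcases mem_swap.1 hA with rfl | rfl | ⟨hA, hA1, hA2⟩
    · rcases mem_twoPart.1 hB with rfl | rfl
      · exact Or.inl s1
      · rw [s2] at h0 ⊢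
        exact Or.inr (Or.inr ⟨⟨⟨_, m1, _, mC', rfl⟩, h0⟩, hne h0 fun x hx hx' => hx.2 hx'.2,
          hne h0 fun x hx hx' => hd hx.1 hx'.1⟩)
    · rcases mem_twoPart.1 hB with rfl | rfl
      · rw [s3] at h0 ⊢
        exact Or.inr (Or.inr ⟨⟨⟨_, m2, _, mC, rfl⟩, h0⟩, hne h0 fun x hx hx' => hd hx'.1 hx.1,
          hne h0 fun x hx hx' => hx'.2 hx.2⟩)
      · exact Or.inr (Or.inl s4)
    · have h3 : (∀ x ∈ A, x ∉ A₁) ∧ (∀ x ∈ A, x ∉ A₂) := by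
        rcases h.cases hA with h3 | h3 | h3
        exacts [(hA1 h3).elim, (hA2 h3).elim, h3.2.2]
      rcases mem_twoPart.1 hB with rfl | rfl
      · rw [(s5 A hA hA1 hA2).1] at h0 ⊢
        exact Or.inr (Or.inr ⟨⟨⟨_, hA, _, mC, rfl⟩, h0⟩, hne h0 fun x hx hx' => h3.1 x hx.1 hx'.1,
          hne h0 fun x hx hx' => h3.2 x hx.1 hx'.1⟩)
      · rw [(s5 A hA hA1 hA2).2] at h0 ⊢
        exact Or.inr (Or.inr ⟨⟨⟨_, hA, _, mC', rfl⟩, h0⟩, hne h0 fun x hx hx' => h3.1 x hx.1 hx'.1,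
          hne h0 fun x hx hx' => h3.2 x hx.1 hx'.1⟩)
  have nC : C.Nonempty := nonempty_of_measureReal_ne_zero (by rw [hPC]; exact p0.ne')
  have nC' : Cᶜ.Nonempty := by
    rw [Set.nonempty_compl]
    intro h0
    rw [h0, probReal_univ] at hPC
    exact p1.ne hPC.symm
  have e1 := hI.join_twoPart hF hC nC nC' hp
  have e2 := hI.join_twoPart hF' hDm nD nD' hp'
  rw [incr, incr, incr, hDT, ← hjoin, e1, e2]
  ring

end Increment

section WellDefined

variable {P : Measure Ω} [IsProbabilityMeasure P] {I : Finset (Set Ω) → ℝ}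
  {𝒜 ℬ : Finset (Set Ω)} {V W V₁ W₁ A₁ A₂ B₁ B₂ C X : Set Ω} {lam : ℝ}

/-- An exchangeable pair splits into two exchangeable pairs of half the measure. -/
lemma Exch.half (hD : Darboux P) (e : Exch P V W) :
    ∃ V₁ W₁, V₁ ⊆ V ∧ W₁ ⊆ W ∧ Exch P V₁ W₁ ∧ Exch P (V \ V₁) (W \ W₁) ∧
      P.real V₁ = P.real V / 2 ∧ P.real (V \ V₁) = P.real V / 2 := by
  obtain ⟨V₁, m1, s1, h1, h1'⟩ := hD.half e.mV
  obtain ⟨W₁, m2, s2, h2, h2'⟩ := hD.half e.mW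
  exact ⟨V₁, W₁, s1, s2, ⟨m1, m2, by rw [h1, h2, e.eq], e.disj.mono s1 s2⟩,
    ⟨e.mV.diff m1, e.mW.diff m2, by rw [h1', h2', e.eq],
      e.disj.mono Set.sdiff_subset Set.sdiff_subset⟩, h1, h1'⟩

/-- An exchange can be carried out in two steps. -/
lemma memF.incr_split (h : memF P V W lam 𝒜 A₁ A₂) (e : Exch P V W) (h1 : V₁ ⊆ V) (h2 : W₁ ⊆ W) :
    incr I V W A₁ A₂ 𝒜 = incr I V₁ W₁ A₁ A₂ 𝒜 +
      incr I (V \ V₁) (W \ W₁) (A₁ \ V₁ ∪ W₁) (A₂ \ W₁ ∪ V₁) (swap V₁ W₁ A₁ A₂ 𝒜) := by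
  have hd := Set.disjoint_left.1 h.disjoint
  obtain ⟨hF, m1, m2, hn, hV, hW, hr⟩ := h
  have h' : memF P V₁ W₁ lam 𝒜 A₁ A₂ := ⟨hF, m1, m2, hn, h1.trans hV, h2.trans hW, hr⟩
  have hVW := Set.disjoint_left.1 e.disj
  rw [incr, incr, incr, h'.swap_swap (V₂ := V) (W₂ := W)]
  · ring
  all_goals
    ext x
    have := @hd x
    have := @hVW x
    have := @h1 x
    have := @h2 x
    have := @hV x
    have := @hW x
    simp only [Set.mem_union, Set.mem_sdiff]
    grind

lemma memF.mono (h : memF P V W lam 𝒜 A₁ A₂) (h1 : V₁ ⊆ V) (h2 : W₁ ⊆ W) :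
    memF P V₁ W₁ lam 𝒜 A₁ A₂ :=
  ⟨h.1, h.2.1, h.2.2.1, h.2.2.2.1, h1.trans h.2.2.2.2.1, h2.trans h.2.2.2.2.2.1, h.2.2.2.2.2.2⟩

/-- For `V` small compared with `A₁ ∩ B₁` and `A₂ ∩ B₂`, both increments are cancelled by that of
a common two-atom partition of ratio `1/λ` independent of `𝒜` and of `ℬ`. -/
lemma memF.incr_eq_of_small (hD : Darboux P) (hI : IsAPE P I) (hl : 0 < lam) (e : Exch P V W)
    (hA : memF P V W lam 𝒜 A₁ A₂) (hB : memF P V W lam ℬ B₁ B₂)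
    (h1 : P.real V ≤ lam / (1 + lam) * P.real (A₁ ∩ B₁))
    (h2 : P.real V ≤ (1 - lam / (1 + lam)) * P.real (A₂ ∩ B₂)) :
    incr I V W A₁ A₂ 𝒜 = incr I V W B₁ B₂ ℬ := by
  set p := lam / (1 + lam) with hp
  have p0 : 0 < p := by positivity
  have p1 : p < 1 := (div_lt_one (by positivity)).2 (by linarith)
  have hcell : ∀ A ∈ 𝒜, ∀ B ∈ ℬ, (A = A₁ ∧ B = B₁ ∨ V ∩ (A ∩ B) = ∅) ∧
      (A = A₂ ∧ B = B₂ ∨ W ∩ (A ∩ B) = ∅) := by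
    intro A hA' B hB'
    simp only [Set.eq_empty_iff_forall_notMem]
    constructor
    · refine or_iff_not_imp_right.2 fun hx => ?_
      push Not at hx
      obtain ⟨x, hx, hxA, hxB⟩ := hx
      exact ⟨hA.1.eq_of_mem hA' hA.2.1 hxA (hA.2.2.2.2.1 hx),
        hB.1.eq_of_mem hB' hB.2.1 hxB (hB.2.2.2.2.1 hx)⟩
    · refine or_iff_not_imp_right.2 fun hx => ?_
      push Not at hx
      obtain ⟨x, hx, hxA, hxB⟩ := hx
      exact ⟨hA.1.eq_of_mem hA' hA.2.2.1 hxA (hA.2.2.2.2.2.1 hx),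
        hB.1.eq_of_mem hB' hB.2.2.1 hxB (hB.2.2.2.2.2.1 hx)⟩
  obtain ⟨C, hC, hVC, hCW, hprop⟩ := (hA.1.join hB.1).exists_prop (p := p) hD e.mV e.mW.compl
    (Set.subset_compl_iff_disjoint_right.2 e.disj)
    (by
      intro G hG
      obtain ⟨⟨A, hA', B, hB', rfl⟩, -⟩ := mem_join.1 hG
      rcases (hcell A hA' B hB').1 with ⟨rfl, rfl⟩ | h0
      · exact (measureReal_mono Set.inter_subset_left).trans h1
      · rw [h0, measureReal_empty]; positivity)
    (by
      intro G hG
      obtain ⟨⟨A, hA', B, hB', rfl⟩, -⟩ := mem_join.1 hG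
      have h3 := measureReal_inter_add_sdiff (μ := P) (s := A ∩ B) e.mW
      rw [Set.sdiff_eq, Set.inter_comm _ W, Set.inter_comm _ Wᶜ] at h3
      rcases (hcell A hA' B hB').2 with ⟨rfl, rfl⟩ | h0
      · have : P.real (W ∩ (A ∩ B)) ≤ P.real W := measureReal_mono Set.inter_subset_left
        have := e.eq
        linarith
      · rw [h0, measureReal_empty] at h3
        have : 0 ≤ P.real (A ∩ B) := measureReal_nonneg
        nlinarith)
  have hWC : W ⊆ Cᶜ := fun x hx hx' => hCW hx' hx
  have hprop' : ∀ A ∈ 𝒜, ∀ B ∈ ℬ, P.real (C ∩ (A ∩ B)) = p * P.real (A ∩ B) := by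
    intro A hA' B hB'
    by_cases h0 : A ∩ B = ∅
    · simp [h0]
    · exact hprop _ (mem_join.2 ⟨⟨A, hA', B, hB', rfl⟩, h0⟩)
  have hone : lam * ((1 - p) / p) = 1 := by
    rw [hp]; field_simp; ring
  obtain ⟨k1, k2⟩ := hA.incr_join hI hl e hC hVC hWC p0 p1 (hA.1.prop_of_join hB.1 hC hprop')
  obtain ⟨l1, l2⟩ := hB.incr_join hI hl e hC hVC hWC p0 p1
    (hB.1.prop_of_join hA.1 hC fun B hB' A hA' => by
      rw [Set.inter_comm B A]; exact hprop' A hA' B hB')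
  rw [hone] at k1 l1
  rw [k1.incr_one hD hI e] at k2
  rw [l1.incr_one hD hI e] at l2
  linarith

lemma memF.incr_eq_aux (hD : Darboux P) (hI : IsAPE P I) (hl : 0 < lam) (k : ℕ) :
    ∀ {V W A₁ A₂ B₁ B₂ : Set Ω} {𝒜 ℬ : Finset (Set Ω)}, Exch P V W →
      memF P V W lam 𝒜 A₁ A₂ → memF P V W lam ℬ B₁ B₂ →
      P.real V ≤ 2 ^ k * (lam / (1 + lam) * P.real (A₁ ∩ B₁)) →
      P.real V ≤ 2 ^ k * ((1 - lam / (1 + lam)) * P.real (A₂ ∩ B₂)) →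
      incr I V W A₁ A₂ 𝒜 = incr I V W B₁ B₂ ℬ := by
  induction k with
  | zero =>
    intro V W A₁ A₂ B₁ B₂ 𝒜 ℬ e hA hB h1 h2
    rw [pow_zero, one_mul] at h1 h2
    exact hA.incr_eq_of_small hD hI hl e hB h1 h2
  | succ k ih =>
    intro V W A₁ A₂ B₁ B₂ 𝒜 ℬ e hA hB h1 h2
    obtain ⟨V₁, W₁, s1, s2, e1, e2, r1, r2⟩ := e.half hD
    have hdA := Set.disjoint_left.1 hA.disjoint
    have hdB := Set.disjoint_left.1 hB.disjoint
    have hVW := Set.disjoint_left.1 e.disj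
    have hA1 := hA.mono s1 s2
    have hB1 := hB.mono s1 s2
    have hVA := hA1.2.2.2.2.1
    have hWA := hA1.2.2.2.2.2.1
    have hVB := hB1.2.2.2.2.1
    have hWB := hB1.2.2.2.2.2.1
    rw [hA.incr_split e s1 s2, hB.incr_split e s1 s2]
    rw [pow_succ] at h1 h2
    congr 1
    · exact ih e1 hA1 hB1 (by linarith) (by linarith)
    · have i1 : P.real ((A₁ \ V₁ ∪ W₁) ∩ (B₁ \ V₁ ∪ W₁)) = P.real (A₁ ∩ B₁) := by
        rw [← real_exchange e1.mV e1.mW (Set.subset_inter hVA hVB) _ e1.eq]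
        · congr 1
          ext x
          have := @hdA x
          have := @hdB x
          simp only [Set.mem_inter_iff, Set.mem_union, Set.mem_sdiff]
          grind
        · exact Set.disjoint_left.2 fun x hx hx' => hdA hx'.1 (hWA hx)
      have i2 : P.real ((A₂ \ W₁ ∪ V₁) ∩ (B₂ \ W₁ ∪ V₁)) = P.real (A₂ ∩ B₂) := by
        rw [← real_exchange e1.mW e1.mV (Set.subset_inter hWA hWB) _ e1.eq.symm]
        · congr 1
          ext x
          have := @hdA x
          have := @hdB x
          simp only [Set.mem_inter_iff, Set.mem_union, Set.mem_sdiff]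
          grind
        · exact Set.disjoint_left.2 fun x hx hx' => hdA (hVA hx) hx'.1
      have j1 : ∀ {A : Set Ω}, V ⊆ A → V \ V₁ ⊆ A \ V₁ ∪ W₁ := fun h x hx =>
        Or.inl ⟨h hx.1, hx.2⟩
      have j2 : ∀ {A : Set Ω}, W ⊆ A → W \ W₁ ⊆ A \ W₁ ∪ V₁ := fun h x hx =>
        Or.inl ⟨h hx.1, hx.2⟩
      refine ih e2 (hA1.step hl e1 (j1 hA.2.2.2.2.1) (j2 hA.2.2.2.2.2.1))
        (hB1.step hl e1 (j1 hB.2.2.2.2.1) (j2 hB.2.2.2.2.2.1)) ?_ ?_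
      · rw [i1]; linarith
      · rw [i2]; linarith

/-- The increment depends on `𝒜 ∈ F_λ(V,W)` only through `λ`. -/
lemma memF.incr_eq (hD : Darboux P) (hI : IsAPE P I) (hl : 0 < lam) (e : Exch P V W)
    (hA : memF P V W lam 𝒜 A₁ A₂) (hB : memF P V W lam ℬ B₁ B₂) :
    incr I V W A₁ A₂ 𝒜 = incr I V W B₁ B₂ ℬ := by
  have p0 : 0 < lam / (1 + lam) := by positivity
  have p1 : 0 < 1 - lam / (1 + lam) := by
    rw [sub_pos, div_lt_one (by positivity)]; linarith
  obtain ⟨k, hk⟩ := pow_unbounded_of_one_lt (max (lam / (1 + lam))⁻¹ (1 - lam / (1 + lam))⁻¹)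
    (one_lt_two (α := ℝ))
  have hk1 := (le_max_left _ _).trans hk.le
  have hk2 := (le_max_right _ _).trans hk.le
  rw [inv_le_iff_one_le_mul₀ p0] at hk1
  rw [inv_le_iff_one_le_mul₀ p1] at hk2
  refine hA.incr_eq_aux hD hI hl k e hB ?_ ?_
  · rw [← mul_assoc]
    exact (measureReal_mono (Set.subset_inter hA.2.2.2.2.1 hB.2.2.2.2.1)).trans
      (le_mul_of_one_le_left measureReal_nonneg hk1)
  · rw [← mul_assoc, e.eq]
    exact (measureReal_mono (Set.subset_inter hA.2.2.2.2.2.1 hB.2.2.2.2.2.1)).trans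
      (le_mul_of_one_le_left measureReal_nonneg hk2)

/-- Two-atom partitions in `F_λ(V,W)` for all `W ⊆ X` simultaneously, when `V` and `X` are small. -/
lemma exists_memF (hD : Darboux P) (hl : 0 < lam) (hV : MeasurableSet V) (hX : MeasurableSet X)
    (hVX : Disjoint V X) (h1 : P.real V ≤ 1 / (1 + lam)) (h2 : P.real X ≤ lam / (1 + lam)) :
    ∃ C, MeasurableSet C ∧ P.real C = 1 / (1 + lam) ∧
      ∀ W, W ⊆ X → memF P V W lam (twoPart C) C Cᶜ := by
  have h3 : (1 : ℝ) / (1 + lam) + lam / (1 + lam) = 1 := by field_simp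
  have h4 : 0 < lam / (1 + lam) := by positivity
  obtain ⟨C, hC, hVC, hCX, hPC⟩ := hD.between hV hX.compl
    (Set.subset_compl_iff_disjoint_right.2 hVX) h1
    (by rw [probReal_compl_eq_one_sub hX]; linarith)
  refine ⟨C, hC, hPC, fun W hW => ?_⟩
  have := memF_twoPart (P := P) (V := V) (W := W) hC hVC (fun x hx hx' => hCX hx' (hW hx))
    (by rw [hPC]; positivity) (by rw [hPC]; linarith)
  convert this using 1
  rw [hPC]
  field_simp
  ring

open Classical in
/-- The value of the increment common to all members of `F_λ(V,W)`, set to `0` when there are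
none. -/
noncomputable def delta0 (P : Measure Ω) (I : Finset (Set Ω) → ℝ) (lam : ℝ) (V W : Set Ω) : ℝ :=
  if h : ∃ x, ∃ 𝒜 A₁ A₂, memF P V W lam 𝒜 A₁ A₂ ∧ x = incr I V W A₁ A₂ 𝒜 then h.choose else 0

lemma memF.delta0_eq (hD : Darboux P) (hI : IsAPE P I) (hl : 0 < lam) (e : Exch P V W)
    (hA : memF P V W lam 𝒜 A₁ A₂) : delta0 P I lam V W = incr I V W A₁ A₂ 𝒜 := by
  have h : ∃ x, ∃ 𝒜 A₁ A₂, memF P V W lam 𝒜 A₁ A₂ ∧ x = incr I V W A₁ A₂ 𝒜 :=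
    ⟨_, 𝒜, A₁, A₂, hA, rfl⟩
  rw [delta0, dif_pos h]
  obtain ⟨ℬ, B₁, B₂, hB, hx⟩ := h.choose_spec
  rw [hx]
  exact hB.incr_eq hD hI hl e hA

end WellDefined

/-! ### Extension of cocycles from small disjoint pairs -/

/-- `D` is a cocycle, additive on disjoint unions, on pairs of sets of equal measure at most `s`. -/
structure Cocycle (P : Measure Ω) (s : ℝ) (D : Set Ω → Set Ω → ℝ) : Prop where
  trans : ∀ U V W, MeasurableSet U → MeasurableSet V → MeasurableSet W → P.real U = P.real V →
    P.real V = P.real W → P.real U ≤ s → D U W = D U V + D V W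
  add : ∀ V₁ V₂ W₁ W₂, MeasurableSet V₁ → MeasurableSet V₂ → MeasurableSet W₁ → MeasurableSet W₂ →
    Disjoint V₁ V₂ → Disjoint W₁ W₂ → P.real V₁ = P.real W₁ → P.real V₂ = P.real W₂ →
    P.real (V₁ ∪ V₂) ≤ s → D (V₁ ∪ V₂) (W₁ ∪ W₂) = D V₁ W₁ + D V₂ W₂

/-- The analogue of `Cocycle` for functions considered only on disjoint pairs. -/
structure PreCocycle (P : Measure Ω) (s : ℝ) (d : Set Ω → Set Ω → ℝ) : Prop where
  trans : ∀ U V W, Exch P U V → Exch P V W → Disjoint U W → P.real U ≤ s →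
    d U W = d U V + d V W
  symm : ∀ V W, Exch P V W → P.real V ≤ s → d W V = -d V W
  add : ∀ V₁ V₂ W₁ W₂, Exch P V₁ W₁ → Exch P V₂ W₂ → Disjoint V₁ V₂ → Disjoint W₁ W₂ →
    Disjoint (V₁ ∪ V₂) (W₁ ∪ W₂) → P.real (V₁ ∪ V₂) ≤ s →
    d (V₁ ∪ V₂) (W₁ ∪ W₂) = d V₁ W₁ + d V₂ W₂

section Extension

variable {P : Measure Ω} [IsProbabilityMeasure P] {s : ℝ} {d D D' : Set Ω → Set Ω → ℝ}
  {V W V₁ W₁ : Set Ω}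

lemma Darboux.exists_disjoint (hD : Darboux P) {Y : Set Ω} (hY : MeasurableSet Y) {t : ℝ}
    (ht : 0 ≤ t) (h : t + P.real Y ≤ 1) :
    ∃ X, MeasurableSet X ∧ Disjoint X Y ∧ P.real X = t := by
  obtain ⟨X, hX, -, hXY, h⟩ := hD.between MeasurableSet.empty hY.compl (Set.empty_subset _)
    (θ := t) (by rwa [measureReal_empty]) (by rw [probReal_compl_eq_one_sub hY]; linarith)
  exact ⟨X, hX, Set.subset_compl_iff_disjoint_right.1 hXY, h⟩

/-- Going from `V` to `W` through an auxiliary set `U` disjoint from both does not depend on `U`. -/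
lemma PreCocycle.indep (h : PreCocycle P s d) (hD : Darboux P) (hs : 5 * s ≤ 1) {U U' : Set Ω}
    (hVs : P.real V ≤ s) (h1 : Exch P V U) (h2 : Exch P U W) (h1' : Exch P V U')
    (h2' : Exch P U' W) : d V U + d U W = d V U' + d U' W := by
  have eU := h1.eq
  have eW := h2.eq
  have eU' := h1'.eq
  obtain ⟨X, hX, hdis, e⟩ := hD.exists_disjoint
    ((h1.mV.union h1.mW).union (h1'.mW.union h2.mW)) (t := P.real V) measureReal_nonneg (by
      have a1 := measureReal_union_le (μ := P) (V ∪ U) (U' ∪ W)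
      have a2 := measureReal_union_le (μ := P) V U
      have a3 := measureReal_union_le (μ := P) U' W
      linarith)
  simp only [Set.disjoint_union_right] at hdis
  obtain ⟨⟨dV, dU⟩, dU', dW⟩ := hdis
  have eVX : Exch P V X := ⟨h1.mV, hX, e.symm, dV.symm⟩
  have eXU : Exch P X U := ⟨hX, h1.mW, by linarith, dU⟩
  have eXU' : Exch P X U' := ⟨hX, h1'.mW, by linarith, dU'⟩
  have eXW : Exch P X W := ⟨hX, h2.mW, by linarith, dW⟩
  have t1 := h.trans V X U eVX eXU h1.disj hVs
  have t2 := h.trans U X W eXU.symm eXW h2.disj (by linarith)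
  have t3 := h.trans V X U' eVX eXU' h1'.disj hVs
  have t4 := h.trans U' X W eXU'.symm eXW h2'.disj (by linarith)
  have t5 := h.symm X U eXU (by linarith)
  have t6 := h.symm X U' eXU' (by linarith)
  linarith

/-- A function on small disjoint pairs extends to all small pairs, by passing through an auxiliary
set disjoint from both members of the pair. -/
lemma PreCocycle.exists_cocycle (h : PreCocycle P s d) (hD : Darboux P) (hs : 5 * s ≤ 1) :
    ∃ D, Cocycle P s D ∧ ∀ V W, Exch P V W → P.real V ≤ s → D V W = d V W := by
  have key : ∀ V W, ∃ x, ∀ U, Exch P V U → Exch P U W → P.real V ≤ s → x = d V U + d U W := by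
    intro V W
    by_cases hU : ∃ U, Exch P V U ∧ Exch P U W
    · obtain ⟨U, h1, h2⟩ := hU
      exact ⟨_, fun U' h1' h2' hVs => h.indep hD hs hVs h1 h2 h1' h2'⟩
    · exact ⟨0, fun U h1 h2 _ => (hU ⟨U, h1, h2⟩).elim⟩
  choose D hDef using key
  refine ⟨D, ⟨?_, ?_⟩, ?_⟩
  · intro U V W mU mV mW h1 h2 hUs
    obtain ⟨X, hX, hdis, e⟩ := hD.exists_disjoint ((mU.union mV).union mW) (t := P.real U)
      measureReal_nonneg (by
        have a1 := measureReal_union_le (μ := P) (U ∪ V) W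
        have a2 := measureReal_union_le (μ := P) U V
        linarith)
    simp only [Set.disjoint_union_right] at hdis
    obtain ⟨⟨dU, dV⟩, dW⟩ := hdis
    have eU : Exch P X U := ⟨hX, mU, e, dU⟩
    have eV : Exch P X V := ⟨hX, mV, by linarith, dV⟩
    have eW : Exch P X W := ⟨hX, mW, by linarith, dW⟩
    rw [hDef U W X eU.symm eW hUs, hDef U V X eU.symm eV hUs, hDef V W X eV.symm eW (by linarith),
      h.symm X V eV (by linarith)]
    ring
  · intro V₁ V₂ W₁ W₂ mV₁ mV₂ mW₁ mW₂ hV hW h1 h2 hs'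
    have uV := measureReal_union (μ := P) hV mV₂
    have uW := measureReal_union (μ := P) hW mW₂
    have n1 : 0 ≤ P.real V₁ := measureReal_nonneg
    have n2 : 0 ≤ P.real V₂ := measureReal_nonneg
    obtain ⟨X, hX, hdis, e⟩ := hD.exists_disjoint ((mV₁.union mV₂).union (mW₁.union mW₂))
      (t := P.real V₁ + P.real V₂) (by linarith) (by
        have a1 := measureReal_union_le (μ := P) (V₁ ∪ V₂) (W₁ ∪ W₂)
        linarith)
    obtain ⟨X₁, hX₁, -, hXX, e₁⟩ := hD.between MeasurableSet.empty hX (Set.empty_subset _)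
      (θ := P.real V₁) (by rw [measureReal_empty]; linarith) (by linarith)
    obtain ⟨X₂, hX₂, rfl, hX12⟩ : ∃ X₂, MeasurableSet X₂ ∧ X = X₁ ∪ X₂ ∧ Disjoint X₁ X₂ :=
      ⟨X \ X₁, hX.diff hX₁, (Set.union_sdiff_cancel hXX).symm, Set.disjoint_sdiff_right⟩
    have uX := measureReal_union (μ := P) hX12 hX₂
    simp only [Set.disjoint_union_right, Set.disjoint_union_left] at hdis
    obtain ⟨⟨⟨d1, d2⟩, d3, d4⟩, ⟨d5, d6⟩, d7, d8⟩ := hdis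
    have eV₁ : Exch P X₁ V₁ := ⟨hX₁, mV₁, e₁, by assumption⟩
    have eV₂ : Exch P X₂ V₂ := ⟨hX₂, mV₂, by linarith, by assumption⟩
    have eW₁ : Exch P X₁ W₁ := ⟨hX₁, mW₁, by linarith, by assumption⟩
    have eW₂ : Exch P X₂ W₂ := ⟨hX₂, mW₂, by linarith, by assumption⟩
    have dV : Disjoint (V₁ ∪ V₂) (X₁ ∪ X₂) := by
      simp only [Set.disjoint_union_right, Set.disjoint_union_left]
      exact ⟨⟨eV₁.disj.symm, Disjoint.symm (by assumption)⟩,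
        Disjoint.symm (by assumption), eV₂.disj.symm⟩
    have dW : Disjoint (X₁ ∪ X₂) (W₁ ∪ W₂) := by
      simp only [Set.disjoint_union_right, Set.disjoint_union_left]
      exact ⟨⟨eW₁.disj, by assumption⟩, by assumption, eW₂.disj⟩
    have eV : Exch P (V₁ ∪ V₂) (X₁ ∪ X₂) := ⟨mV₁.union mV₂, hX, by linarith, dV⟩
    have eW : Exch P (X₁ ∪ X₂) (W₁ ∪ W₂) := ⟨hX, mW₁.union mW₂, by linarith, dW⟩
    rw [hDef _ _ _ eV eW hs', hDef _ _ _ eV₁.symm eW₁ (by linarith),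
      hDef _ _ _ eV₂.symm eW₂ (by linarith), h.add _ _ _ _ eV₁.symm eV₂.symm hV hX12 dV hs',
      h.add _ _ _ _ eW₁ eW₂ hX12 hW dW (by linarith)]
    ring
  · intro V W e hVs
    have eq := e.eq
    obtain ⟨X, hX, hdis, eX⟩ := hD.exists_disjoint (e.mV.union e.mW) (t := P.real V)
      measureReal_nonneg (by
        have a1 := measureReal_union_le (μ := P) V W
        linarith [measureReal_nonneg (μ := P) (s := V)])
    rw [Set.disjoint_union_right] at hdis
    have e1 : Exch P V X := ⟨e.mV, hX, eX.symm, hdis.1.symm⟩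
    have e2 : Exch P X W := ⟨hX, e.mW, by linarith, hdis.2⟩
    rw [hDef V W X e1 e2 hVs, h.trans V X W e1 e2 e.disj hVs]

lemma Cocycle.self (h : Cocycle P s D) (hV : MeasurableSet V) (hVs : P.real V ≤ s) :
    D V V = 0 := by
  have := h.trans V V V hV hV hV rfl rfl hVs
  linarith

/-- Two halvings `V = V₁ ⊔ (V ∖ V₁) = W₁ ⊔ (V ∖ W₁)` have opposite defects: both are given by the
pair `V₁ ∖ W₁`, `W₁ ∖ V₁`, in opposite order. -/
lemma Cocycle.halves (h : Cocycle P s D) (hV : MeasurableSet V) (hVs : P.real V ≤ 2 * s)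
    (m1 : MeasurableSet V₁) (m2 : MeasurableSet W₁) (h1 : V₁ ⊆ V) (h2 : W₁ ⊆ V)
    (r1 : P.real V₁ = P.real V / 2) (r2 : P.real W₁ = P.real V / 2) :
    D V₁ W₁ + D (V \ V₁) (V \ W₁) = 0 := by
  have a1 := measureReal_inter_add_sdiff (μ := P) (s := V₁) m2
  have a2 := measureReal_inter_add_sdiff (μ := P) (s := W₁) m1
  rw [Set.inter_comm] at a2
  have b1 := measureReal_sdiff (μ := P) h1 m1
  have b2 := measureReal_sdiff (μ := P) h2 m2
  have n1 : 0 ≤ P.real (V₁ ∩ W₁) := measureReal_nonneg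
  have n2 : 0 ≤ P.real (V₁ \ W₁) := measureReal_nonneg
  have u1 : (V₁ ∩ W₁) ∪ (V₁ \ W₁) = V₁ := Set.inter_union_sdiff _ _
  have u2 : (V₁ ∩ W₁) ∪ (W₁ \ V₁) = W₁ := by rw [Set.inter_comm]; exact Set.inter_union_sdiff _ _
  have u3 : (V \ (V₁ ∪ W₁)) ∪ (W₁ \ V₁) = V \ V₁ := by
    ext x; have := @h2 x; simp only [Set.mem_union, Set.mem_sdiff]; tauto
  have u4 : (V \ (V₁ ∪ W₁)) ∪ (V₁ \ W₁) = V \ W₁ := by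
    ext x; have := @h1 x; simp only [Set.mem_union, Set.mem_sdiff]; tauto
  have d1 : Disjoint (V₁ ∩ W₁) (V₁ \ W₁) := Set.disjoint_left.2 fun x hx hx' => hx'.2 hx.2
  have d2 : Disjoint (V₁ ∩ W₁) (W₁ \ V₁) := Set.disjoint_left.2 fun x hx hx' => hx'.2 hx.1
  have d3 : Disjoint (V \ (V₁ ∪ W₁)) (W₁ \ V₁) :=
    Set.disjoint_left.2 fun x hx hx' => hx.2 (Or.inr hx'.1)
  have d4 : Disjoint (V \ (V₁ ∪ W₁)) (V₁ \ W₁) :=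
    Set.disjoint_left.2 fun x hx hx' => hx.2 (Or.inl hx'.1)
  have v3 := measureReal_union (μ := P) d3 (m2.diff m1)
  rw [u3] at v3
  have c1 := h.add _ _ _ _ (m1.inter m2) (m1.diff m2) (m1.inter m2) (m2.diff m1) d1 d2 rfl
    (by linarith) (by rw [u1]; linarith)
  have c2 := h.add _ _ _ _ (hV.diff (m1.union m2)) (m2.diff m1) (hV.diff (m1.union m2))
    (m1.diff m2) d3 d4 rfl (by linarith) (by rw [u3]; linarith)
  have n3 : 0 ≤ P.real (V \ (V₁ ∪ W₁)) := measureReal_nonneg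
  rw [u1, u2, h.self (m1.inter m2) (by linarith)] at c1
  rw [u3, u4, h.self (hV.diff (m1.union m2)) (by linarith)] at c2
  have c3 := h.trans _ _ _ (m1.diff m2) (m2.diff m1) (m1.diff m2) (by linarith) (by linarith)
    (by linarith)
  rw [h.self (m1.diff m2) (by linarith)] at c3
  linarith

/-- The range of a cocycle can be doubled, by summing over halves. -/
lemma Cocycle.double (h : Cocycle P s D) (hD : Darboux P) :
    ∃ D', Cocycle P (2 * s) D' ∧ ∀ V W, MeasurableSet V → MeasurableSet W →
      P.real V = P.real W → P.real V ≤ s → D' V W = D V W := by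
  have key : ∀ V : Set Ω, ∃ B, MeasurableSet V → MeasurableSet B ∧ B ⊆ V ∧
      P.real B = P.real V / 2 ∧ P.real (V \ B) = P.real V / 2 := by
    intro V
    by_cases hV : MeasurableSet V
    · obtain ⟨B, hB⟩ := hD.half hV
      exact ⟨B, fun _ => hB⟩
    · exact ⟨∅, fun h => (hV h).elim⟩
  choose f hf using key
  -- the value may be computed from any halves
  have hval : ∀ V W V₁ W₁, MeasurableSet V → MeasurableSet W → P.real V = P.real W →
      P.real V ≤ 2 * s → MeasurableSet V₁ → MeasurableSet W₁ → V₁ ⊆ V → W₁ ⊆ W →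
      P.real V₁ = P.real V / 2 → P.real W₁ = P.real W / 2 →
      D (f V) (f W) + D (V \ f V) (W \ f W) = D V₁ W₁ + D (V \ V₁) (W \ W₁) := by
    intro V W V₁ W₁ mV mW e hs' m1 m2 h1 h2 r1 r2
    obtain ⟨mf, sf, rf, rf'⟩ := hf V mV
    obtain ⟨mg, sg, rg, rg'⟩ := hf W mW
    have b1 := measureReal_sdiff (μ := P) h1 m1
    have b2 := measureReal_sdiff (μ := P) h2 m2
    have c1 := h.halves mV hs' mf m1 sf h1 rf r1
    have c2 := h.halves mW (by linarith) m2 mg h2 sg r2 rg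
    have t1 := h.trans (f V) V₁ (f W) mf m1 mg (by linarith) (by linarith) (by linarith)
    have t2 := h.trans V₁ W₁ (f W) m1 m2 mg (by linarith) (by linarith) (by linarith)
    have t3 := h.trans (V \ f V) (V \ V₁) (W \ f W) (mV.diff mf) (mV.diff m1) (mW.diff mg)
      (by linarith) (by linarith) (by linarith)
    have t4 := h.trans (V \ V₁) (W \ W₁) (W \ f W) (mV.diff m1) (mW.diff m2) (mW.diff mg)
      (by linarith) (by linarith) (by linarith)
    linarith
  refine ⟨fun V W => D (f V) (f W) + D (V \ f V) (W \ f W), ⟨?_, ?_⟩, ?_⟩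
  · intro U V W mU mV mW e1 e2 hs'
    obtain ⟨mf, sf, rf, rf'⟩ := hf U mU
    obtain ⟨mg, sg, rg, rg'⟩ := hf V mV
    obtain ⟨mh, sh, rh, rh'⟩ := hf W mW
    have t1 := h.trans (f U) (f V) (f W) mf mg mh (by linarith) (by linarith) (by linarith)
    have t2 := h.trans (U \ f U) (V \ f V) (W \ f W) (mU.diff mf) (mV.diff mg) (mW.diff mh)
      (by linarith) (by linarith) (by linarith)
    linarith
  · intro V₁ V₂ W₁ W₂ mV₁ mV₂ mW₁ mW₂ hV hW e1 e2 hs'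
    obtain ⟨p1, p2, p3, p4⟩ := hf V₁ mV₁
    obtain ⟨q1, q2, q3, q4⟩ := hf V₂ mV₂
    obtain ⟨p1', p2', p3', p4'⟩ := hf W₁ mW₁
    obtain ⟨q1', q2', q3', q4'⟩ := hf W₂ mW₂
    have uV := measureReal_union (μ := P) hV mV₂
    have uW := measureReal_union (μ := P) hW mW₂
    have dV := hV.mono p2 q2
    have dW := hW.mono p2' q2'
    have uV' := measureReal_union (μ := P) dV q1
    have uW' := measureReal_union (μ := P) dW q1'
    have s1 : (V₁ ∪ V₂) \ (f V₁ ∪ f V₂) = (V₁ \ f V₁) ∪ (V₂ \ f V₂) := by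
      have hV := Set.disjoint_left.1 hV
      ext x; have := @p2 x; have := @q2 x; have := @hV x
      simp only [Set.mem_union, Set.mem_sdiff]; tauto
    have s2 : (W₁ ∪ W₂) \ (f W₁ ∪ f W₂) = (W₁ \ f W₁) ∪ (W₂ \ f W₂) := by
      have hW := Set.disjoint_left.1 hW
      ext x; have := @p2' x; have := @q2' x; have := @hW x
      simp only [Set.mem_union, Set.mem_sdiff]; tauto
    have dV' : Disjoint (V₁ \ f V₁) (V₂ \ f V₂) := hV.mono Set.sdiff_subset Set.sdiff_subset
    have dW' : Disjoint (W₁ \ f W₁) (W₂ \ f W₂) := hW.mono Set.sdiff_subset Set.sdiff_subset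
    have uV'' := measureReal_union (μ := P) dV' (mV₂.diff q1)
    rw [hval _ _ (f V₁ ∪ f V₂) (f W₁ ∪ f W₂) (mV₁.union mV₂) (mW₁.union mW₂) (by linarith) hs'
      (p1.union q1) (p1'.union q1') (Set.union_subset_union p2 q2)
      (Set.union_subset_union p2' q2') (by linarith) (by linarith), s1, s2,
      h.add _ _ _ _ p1 q1 p1' q1' dV dW (by linarith) (by linarith) (by linarith),
      h.add _ _ _ _ (mV₁.diff p1) (mV₂.diff q1) (mW₁.diff p1') (mW₂.diff q1') dV' dW'
        (by linarith) (by linarith) (by linarith)]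
    ring
  · intro V W mV mW e hs'
    obtain ⟨p1, p2, p3, p4⟩ := hf V mV
    obtain ⟨q1, q2, q3, q4⟩ := hf W mW
    have := h.add (f V) (V \ f V) (f W) (W \ f W) p1 (mV.diff p1) q1 (mW.diff q1)
      Set.disjoint_sdiff_right Set.disjoint_sdiff_right (by linarith) (by linarith)
      (by rwa [Set.union_sdiff_cancel p2])
    rw [Set.union_sdiff_cancel p2, Set.union_sdiff_cancel q2] at this
    exact this.symm

lemma Cocycle.extend (h : Cocycle P s D) (hD : Darboux P) (hs : 0 < s) :
    ∃ D', Cocycle P 1 D' ∧ ∀ V W, MeasurableSet V → MeasurableSet W →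
      P.real V = P.real W → P.real V ≤ s → D' V W = D V W := by
  have key : ∀ k : ℕ, ∃ D', Cocycle P (2 ^ k * s) D' ∧ ∀ V W, MeasurableSet V →
      MeasurableSet W → P.real V = P.real W → P.real V ≤ s → D' V W = D V W := by
    intro k
    induction k with
    | zero => exact ⟨D, by rwa [pow_zero, one_mul], fun _ _ _ _ _ _ => rfl⟩
    | succ k ih =>
      obtain ⟨D₁, h1, h1'⟩ := ih
      obtain ⟨D₂, h2, h2'⟩ := h1.double hD
      refine ⟨D₂, by rwa [pow_succ', mul_assoc], fun V W mV mW e hVs => ?_⟩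
      rw [h2' V W mV mW e (hVs.trans (le_mul_of_one_le_left hs.le (one_le_pow₀ one_le_two))),
        h1' V W mV mW e hVs]
  obtain ⟨k, hk⟩ := pow_unbounded_of_one_lt s⁻¹ (one_lt_two (α := ℝ))
  rw [inv_lt_iff_one_lt_mul₀ hs] at hk
  obtain ⟨D', h1, h2⟩ := key k
  exact ⟨D', ⟨fun U V W a b c e e' hU => h1.trans U V W a b c e e' (hU.trans hk.le),
    fun V₁ V₂ W₁ W₂ a b c d e f g i hU =>
      h1.add V₁ V₂ W₁ W₂ a b c d e f g i (hU.trans hk.le)⟩, h2⟩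

/-- A cocycle is determined by its values on small disjoint pairs. -/
lemma Cocycle.unique (h : Cocycle P 1 D) (h' : Cocycle P 1 D') (hD : Darboux P) (hs : 0 < s)
    (hs' : 3 * s ≤ 1) (hag : ∀ V W, Exch P V W → P.real V ≤ s → D V W = D' V W)
    (mV : MeasurableSet V) (mW : MeasurableSet W) (e : P.real V = P.real W) :
    D V W = D' V W := by
  have key : ∀ k : ℕ, ∀ V W, MeasurableSet V → MeasurableSet W → P.real V = P.real W →
      P.real V ≤ 2 ^ k * s → D V W = D' V W := by
    intro k
    induction k with
    | zero =>
      intro V W mV mW e hV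
      rw [pow_zero, one_mul] at hV
      obtain ⟨X, hX, hdis, eX⟩ := hD.exists_disjoint (mV.union mW) (t := P.real V)
        measureReal_nonneg (by
          have a1 := measureReal_union_le (μ := P) V W
          linarith [measureReal_nonneg (μ := P) (s := V)])
      rw [Set.disjoint_union_right] at hdis
      rw [h.trans V X W mV hX mW eX.symm (by linarith) measureReal_le_one,
        h'.trans V X W mV hX mW eX.symm (by linarith) measureReal_le_one,
        hag V X ⟨mV, hX, eX.symm, hdis.1.symm⟩ hV,
        hag X W ⟨hX, mW, by linarith, hdis.2⟩ (by linarith)]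
    | succ k ih =>
      intro V W mV mW e hV
      rw [pow_succ] at hV
      obtain ⟨V₁, p1, p2, p3, p4⟩ := hD.half mV
      obtain ⟨W₁, q1, q2, q3, q4⟩ := hD.half mW
      have a := h.add V₁ (V \ V₁) W₁ (W \ W₁) p1 (mV.diff p1) q1 (mW.diff q1)
        Set.disjoint_sdiff_right Set.disjoint_sdiff_right (by linarith) (by linarith)
        measureReal_le_one
      have a' := h'.add V₁ (V \ V₁) W₁ (W \ W₁) p1 (mV.diff p1) q1 (mW.diff q1)
        Set.disjoint_sdiff_right Set.disjoint_sdiff_right (by linarith) (by linarith)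
        measureReal_le_one
      rw [Set.union_sdiff_cancel p2, Set.union_sdiff_cancel q2] at a a'
      rw [a, a', ih V₁ W₁ p1 q1 (by linarith) (by linarith),
        ih _ _ (mV.diff p1) (mW.diff q1) (by linarith) (by linarith)]
  obtain ⟨k, hk⟩ := pow_unbounded_of_one_lt s⁻¹ (one_lt_two (α := ℝ))
  rw [inv_lt_iff_one_lt_mul₀ hs] at hk
  exact key k V W mV mW e (measureReal_le_one.trans hk.le)

end Extension

/-! ### Construction of `Δ` -/

section Construction

variable {P : Measure Ω} [IsProbabilityMeasure P] {I : Finset (Set Ω) → ℝ}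
  {𝒜 : Finset (Set Ω)} {U V W V₁ V₂ W₁ W₂ A₁ A₂ : Set Ω} {lam kap s : ℝ}
  {D D' : Set Ω → Set Ω → ℝ}

/-- Performing `T_{V,W}` and then `T_{W,V}` restores the partition. -/
lemma memF.incr_symm (h : memF P V W lam 𝒜 A₁ A₂) (hl : 0 < lam) (e : Exch P V W) :
    incr I W V (A₁ \ V ∪ W) (A₂ \ W ∪ V) (swap V W A₁ A₂ 𝒜) = -incr I V W A₁ A₂ 𝒜 := by
  have hd := Set.disjoint_left.1 h.disjoint
  have hVW := Set.disjoint_left.1 e.disj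
  have hV := h.2.2.2.2.1
  have hW := h.2.2.2.2.2.1
  have h0 := (h.mono (Set.empty_subset V) (Set.empty_subset W)).swap_eq_self hl
    ⟨.empty, .empty, rfl, Set.disjoint_empty _⟩ (by simpa using h.2.1) (by simpa using h.2.2.1)
  rw [incr, incr, h.swap_swap (V₂ := ∅) (W₂ := ∅), h0]
  · ring
  all_goals
    ext x
    have := @hd x
    have := @hVW x
    have := @hV x
    have := @hW x
    simp only [Set.mem_union, Set.mem_sdiff, Set.mem_empty_iff_false]
    grind

/-- Performing `T_{U,V}` and then `T_{V,W}` amounts to performing `T_{U,W}`. -/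
lemma memF.incr_trans (hV : memF P U V lam 𝒜 A₁ A₂) (hW : memF P U W lam 𝒜 A₁ A₂)
    (e : Exch P U V) (hUW : Disjoint U W) (hVW : Disjoint V W) :
    incr I U W A₁ A₂ 𝒜 = incr I U V A₁ A₂ 𝒜 +
      incr I V W (A₁ \ U ∪ V) (A₂ \ V ∪ U) (swap U V A₁ A₂ 𝒜) := by
  have hd := Set.disjoint_left.1 hV.disjoint
  have h1 := Set.disjoint_left.1 e.disj
  have h2 := Set.disjoint_left.1 hUW
  have h3 := Set.disjoint_left.1 hVW
  have s1 := hV.2.2.2.2.1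
  have s2 := hV.2.2.2.2.2.1
  have s3 := hW.2.2.2.2.2.1
  rw [incr, incr, incr, hV.swap_swap (V₂ := U) (W₂ := W)]
  · ring
  all_goals
    ext x
    have := @hd x
    have := @h1 x
    have := @h2 x
    have := @h3 x
    have := @s1 x
    have := @s2 x
    have := @s3 x
    simp only [Set.mem_union, Set.mem_sdiff]
    grind

/-- After exchanging part of `V` with part of `W`, the remainders may still be exchanged. -/
lemma memF.rest (h : memF P V W lam 𝒜 A₁ A₂) (hl : 0 < lam) (h1 : V₁ ⊆ V) (h2 : W₁ ⊆ W)
    (e : Exch P V₁ W₁) :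
    memF P (V \ V₁) (W \ W₁) lam (swap V₁ W₁ A₁ A₂ 𝒜) (A₁ \ V₁ ∪ W₁) (A₂ \ W₁ ∪ V₁) :=
  (h.mono h1 h2).step hl e (fun _ hx => Or.inl ⟨h.2.2.2.2.1 hx.1, hx.2⟩)
    fun _ hx => Or.inl ⟨h.2.2.2.2.2.1 hx.1, hx.2⟩

/-- A size below which disjoint sets are handled by two-atom partitions of ratio `lam`. The factor
`1/5` leaves room for an auxiliary set disjoint from four given ones. -/
noncomputable def bd (lam : ℝ) : ℝ := min (1 / (1 + lam)) (lam / (1 + lam)) / 5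

lemma bd_pos (hl : 0 < lam) : 0 < bd lam := by
  unfold bd; positivity

lemma five_mul_bd_left : 5 * bd lam ≤ 1 / (1 + lam) := by
  have := min_le_left (1 / (1 + lam)) (lam / (1 + lam))
  unfold bd; linarith

lemma five_mul_bd_right : 5 * bd lam ≤ lam / (1 + lam) := by
  have := min_le_right (1 / (1 + lam)) (lam / (1 + lam))
  unfold bd; linarith

lemma five_mul_bd_le_one (hl : 0 < lam) : 5 * bd lam ≤ 1 :=
  five_mul_bd_left.trans ((div_le_one (by linarith)).2 (by linarith))

lemma exists_memF_of_le_bd (hD : Darboux P) (hl : 0 < lam) (e : Exch P V W)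
    (hs : P.real V ≤ bd lam) : ∃ C, memF P V W lam (twoPart C) C Cᶜ := by
  have hb := bd_pos hl
  have b1 := five_mul_bd_left (lam := lam)
  have b2 := five_mul_bd_right (lam := lam)
  have eq := e.eq
  obtain ⟨C, -, -, h⟩ := exists_memF hD hl e.mV e.mW e.disj (by linarith) (by linarith)
  exact ⟨C, h W subset_rfl⟩

lemma preCocycle_delta0 (hD : Darboux P) (hI : IsAPE P I) (hl : 0 < lam) :
    PreCocycle P (bd lam) (delta0 P I lam) := by
  have hb := bd_pos hl
  have b1 := five_mul_bd_left (lam := lam)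
  have b2 := five_mul_bd_right (lam := lam)
  refine ⟨?_, ?_, ?_⟩
  · intro U V W e1 e2 hUW hs
    have q1 := e1.eq
    have q2 := e2.eq
    have a := measureReal_union_le (μ := P) V W
    obtain ⟨C, -, -, h⟩ := exists_memF hD hl e1.mV (e1.mW.union e2.mW)
      (Set.disjoint_union_right.2 ⟨e1.disj, hUW⟩) (by linarith) (by linarith)
    have hV := h V Set.subset_union_left
    have hW := h W Set.subset_union_right
    have hd := Set.disjoint_left.1 e2.disj
    have hVW := hV.step (V₂ := V) (W₂ := W) hl e1 Set.subset_union_right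
      fun x hx => Or.inl ⟨hW.2.2.2.2.2.1 hx, fun hx' => hd hx' hx⟩
    rw [hW.delta0_eq hD hI hl ⟨e1.mV, e2.mW, by linarith, hUW⟩, hV.delta0_eq hD hI hl e1,
      hVW.delta0_eq hD hI hl e2]
    exact hV.incr_trans hW e1 hUW e2.disj
  · intro V W e hs
    obtain ⟨C, h⟩ := exists_memF_of_le_bd hD hl e hs
    have h' := h.step (V₂ := W) (W₂ := V) hl e Set.subset_union_right Set.subset_union_right
    rw [h'.delta0_eq hD hI hl e.symm, h.delta0_eq hD hI hl e]
    exact h.incr_symm hl e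
  · intro V₁ V₂ W₁ W₂ e1 e2 hV hW hVW hs
    have uV := measureReal_union (μ := P) hV e2.mV
    have uW := measureReal_union (μ := P) hW e2.mW
    have q1 := e1.eq
    have q2 := e2.eq
    have e : Exch P (V₁ ∪ V₂) (W₁ ∪ W₂) :=
      ⟨e1.mV.union e2.mV, e1.mW.union e2.mW, by linarith, hVW⟩
    obtain ⟨C, h⟩ := exists_memF_of_le_bd hD hl e hs
    have h' := h.rest hl Set.subset_union_left Set.subset_union_left e1
    have hsp := h.incr_split (I := I) e (V₁ := V₁) (W₁ := W₁) Set.subset_union_left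
      Set.subset_union_left
    rw [Set.union_sdiff_cancel_left (Set.disjoint_iff.1 hV),
      Set.union_sdiff_cancel_left (Set.disjoint_iff.1 hW)] at h' hsp
    rw [h.delta0_eq hD hI hl e, hsp, h'.delta0_eq hD hI hl e2,
      (h.mono Set.subset_union_left Set.subset_union_left).delta0_eq hD hI hl e1]

/-- A cocycle giving the right increments for small exchanges gives the right increments for all
exchanges. -/
lemma Cocycle.eq_incr (h : Cocycle P 1 D) (hD : Darboux P) (hI : IsAPE P I) (hl : 0 < lam)
    (hs : 0 < s) (hag : ∀ V W, Exch P V W → P.real V ≤ s → D V W = delta0 P I lam V W)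
    (e : Exch P V W) (hA : memF P V W lam 𝒜 A₁ A₂) : D V W = incr I V W A₁ A₂ 𝒜 := by
  have key : ∀ k : ℕ, ∀ {V W A₁ A₂ : Set Ω} {𝒜 : Finset (Set Ω)}, Exch P V W →
      memF P V W lam 𝒜 A₁ A₂ → P.real V ≤ 2 ^ k * s → D V W = incr I V W A₁ A₂ 𝒜 := by
    intro k
    induction k with
    | zero =>
      intro V W A₁ A₂ 𝒜 e hA hV
      rw [pow_zero, one_mul] at hV
      rw [hag V W e hV, hA.delta0_eq hD hI hl e]
    | succ k ih =>
      intro V W A₁ A₂ 𝒜 e hA hV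
      rw [pow_succ] at hV
      obtain ⟨V₁, W₁, s1, s2, e1, e2, r1, r2⟩ := e.half hD
      have a := h.add V₁ (V \ V₁) W₁ (W \ W₁) e1.mV e2.mV e1.mW e2.mW
        Set.disjoint_sdiff_right Set.disjoint_sdiff_right e1.eq e2.eq measureReal_le_one
      rw [Set.union_sdiff_cancel s1, Set.union_sdiff_cancel s2] at a
      rw [a, hA.incr_split e s1 s2, ih e1 (hA.mono s1 s2) (by linarith),
        ih e2 (hA.rest hl s1 s2 e1) (by linarith)]
  obtain ⟨k, hk⟩ := pow_unbounded_of_one_lt s⁻¹ (one_lt_two (α := ℝ))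
  rw [inv_lt_iff_one_lt_mul₀ hs] at hk
  exact key k e hA (measureReal_le_one.trans hk.le)

lemma exists_delta (hD : Darboux P) (hI : IsAPE P I) (hl : 0 < lam) :
    ∃ D, Cocycle P 1 D ∧ ∀ V W 𝒜 A₁ A₂, Exch P V W → memF P V W lam 𝒜 A₁ A₂ →
      D V W = incr I V W A₁ A₂ 𝒜 := by
  obtain ⟨D, h, hag⟩ := (preCocycle_delta0 hD hI hl).exists_cocycle hD (five_mul_bd_le_one hl)
  obtain ⟨D', h', hag'⟩ := h.extend hD (bd_pos hl)
  exact ⟨D', h', fun V W 𝒜 A₁ A₂ e hA => h'.eq_incr hD hI hl (bd_pos hl)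
    (fun V W e hs => (hag' V W e.mV e.mW e.eq hs).trans (hag V W e hs)) e hA⟩

lemma Cocycle.sum (h : Cocycle P s D) (h' : Cocycle P s D') :
    Cocycle P s fun V W => D V W + D' V W := by
  refine ⟨?_, ?_⟩
  · intro U V W a b c d e f
    rw [h.trans U V W a b c d e f, h'.trans U V W a b c d e f]
    ring
  · intro V₁ V₂ W₁ W₂ a b c d e f g i j
    rw [h.add V₁ V₂ W₁ W₂ a b c d e f g i j, h'.add V₁ V₂ W₁ W₂ a b c d e f g i j]
    ring

/-- For `V`, `W` small, there are two-atom partitions in `F_κ(V,W)` and `F_λ(V,W)` whose join lies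
in `F_{κλ}(V,W)`, and whose increments add up. -/
lemma exists_incr_mul (hD : Darboux P) (hI : IsAPE P I) (hk : 0 < kap) (hl : 0 < lam) :
    ∃ s, 0 < s ∧ 3 * s ≤ 1 ∧ ∀ V W, Exch P V W → P.real V ≤ s →
      ∃ (𝒜 : Finset (Set Ω)) (A₁ A₂ C C' : Set Ω), memF P V W kap (twoPart C) C Cᶜ ∧
        memF P V W lam (twoPart C') C' C'ᶜ ∧ memF P V W (kap * lam) 𝒜 A₁ A₂ ∧
        incr I V W A₁ A₂ 𝒜 =
          incr I V W C Cᶜ (twoPart C) + incr I V W C' C'ᶜ (twoPart C') := by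
  have hp : 1 / (1 + lam) + lam / (1 + lam) = 1 := by field_simp
  have ha : 1 / (1 + kap) + kap / (1 + kap) = 1 := by field_simp
  have hr : (1 - 1 / (1 + lam)) / (1 / (1 + lam)) = lam := by field_simp; ring
  have p0 : 0 < 1 / (1 + lam) := by positivity
  have p0' : 0 < lam / (1 + lam) := by positivity
  have a0 : 0 < 1 / (1 + kap) := by positivity
  have a0' : 0 < kap / (1 + kap) := by positivity
  set p := 1 / (1 + lam)
  set a := 1 / (1 + kap)
  have hp' : lam / (1 + lam) = 1 - p := by linarith
  have ha' : kap / (1 + kap) = 1 - a := by linarith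
  rw [hp'] at p0'
  rw [ha'] at a0'
  have hβ : 0 < min p (1 - p) := lt_min p0 p0'
  have hα : 0 < min a (1 - a) := lt_min a0 a0'
  have m1 := min_le_left p (1 - p)
  have m2 := min_le_right p (1 - p)
  have m3 := min_le_left a (1 - a)
  have m4 := min_le_right a (1 - a)
  set β := min p (1 - p)
  set α := min a (1 - a)
  refine ⟨β * α / 3, by positivity, by nlinarith, fun V W e hV => ?_⟩
  have hV' : P.real V ≤ β * α := by nlinarith
  have hVα : P.real V ≤ α := by nlinarith
  have eq := e.eq
  obtain ⟨C, hC, hPC, h⟩ := exists_memF hD hk e.mV e.mW e.disj (by linarith) (by linarith)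
  have hC1 := h W subset_rfl
  have hatom : ∀ A ∈ twoPart C, MeasurableSet A ∧ α ≤ P.real A := by
    intro A hA
    rcases mem_twoPart.1 hA with rfl | rfl
    · exact ⟨hC, by linarith⟩
    · exact ⟨hC.compl, by rw [probReal_compl_eq_one_sub hC]; linarith⟩
  obtain ⟨C', hC', hVC', hCW', hprop⟩ := hC1.1.exists_prop (p := p) hD e.mV e.mW.compl
    (Set.subset_compl_iff_disjoint_right.2 e.disj)
    (by
      intro A hA
      have t : P.real (V ∩ A) ≤ P.real V := measureReal_mono Set.inter_subset_left
      have := mul_le_mul m1 (hatom A hA).2 hα.le p0.le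
      linarith)
    (by
      intro A hA
      have t : P.real (W ∩ A) ≤ P.real W := measureReal_mono Set.inter_subset_left
      have t2 := measureReal_inter_add_sdiff (μ := P) (s := A) e.mW
      rw [Set.sdiff_eq, Set.inter_comm _ W, Set.inter_comm _ Wᶜ] at t2
      have := mul_le_mul m2 (hatom A hA).2 hα.le p0'.le
      linarith)
  have hWC' : W ⊆ C'ᶜ := fun x hx hx' => hCW' hx' hx
  have hPC' : P.real C' = p := hC1.1.real_of_prop hC' hprop
  have hC2 := memF_twoPart (P := P) (V := V) (W := W) hC' hVC' hWC' (by linarith) (by linarith)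
  obtain ⟨k1, k2⟩ := hC1.incr_join hI hk e hC' hVC' hWC' p0 (by linarith) hprop
  rw [hPC', hr] at hC2
  rw [hr] at k1
  exact ⟨_, _, _, C, C', hC1, hC2, k1, k2⟩

lemma DeltaSpec.cocycle {Δ : Set Ω → Set Ω → ℝ → ℝ} (h : DeltaSpec P I Δ) (hl : 0 < lam) :
    Cocycle P 1 fun V W => Δ V W lam := by
  obtain ⟨-, h2, h3, -⟩ := h
  refine ⟨fun U V W a b c d e _ => ?_, fun V₁ V₂ W₁ W₂ a b c d e f g i _ => ?_⟩
  · exact h2 U V W lam a b c ((measureReal_eq_measureReal_iff).1 d)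
      ((measureReal_eq_measureReal_iff).1 e) hl
  · exact h3 V₁ V₂ W₁ W₂ lam a b c d e f ((measureReal_eq_measureReal_iff).1 g)
      ((measureReal_eq_measureReal_iff).1 i) hl

end Construction

/-- Existence and uniqueness of the quantity `Δ(V,W,λ)`
associated with an additive partition entropy. -/
theorem exists_unique_delta
    {Ω : Type*} [MeasurableSpace Ω] (P : Measure Ω) [IsProbabilityMeasure P]
    (hD : Darboux P) (I : Finset (Set Ω) → ℝ) (hAPE : IsAPE P I) :
    ∃ Δ : Set Ω → Set Ω → ℝ → ℝ, DeltaSpec P I Δ ∧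
      ∀ Δ' : Set Ω → Set Ω → ℝ → ℝ, DeltaSpec P I Δ' →
        ∀ (V W : Set Ω) (lam : ℝ), MeasurableSet V → MeasurableSet W →
          P V = P W → 0 < lam → Δ' V W lam = Δ V W lam := by
  have key : ∀ lam : ℝ, ∃ D : Set Ω → Set Ω → ℝ, 0 < lam → Cocycle P 1 D ∧
      ∀ V W 𝒜 A₁ A₂, Exch P V W → memF P V W lam 𝒜 A₁ A₂ → D V W = incr I V W A₁ A₂ 𝒜 := by
    intro lam
    by_cases hl : 0 < lam
    · obtain ⟨D, h⟩ := exists_delta hD hAPE hl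
      exact ⟨D, fun _ => h⟩
    · exact ⟨fun _ _ => 0, fun h => (hl h).elim⟩
  choose D hDc using key
  have conv : ∀ {V W : Set Ω}, P V = P W → P.real V = P.real W := fun h =>
    (measureReal_eq_measureReal_iff).2 h
  refine ⟨fun V W lam => D lam V W, ⟨?_, ?_, ?_, ?_⟩, ?_⟩
  · intro V W lam mV mW e hl hVW 𝒜 A₁ A₂ hA
    exact (hDc lam hl).2 V W 𝒜 A₁ A₂ ⟨mV, mW, conv e, hVW⟩ hA
  · intro U V W lam mU mV mW e1 e2 hl
    exact (hDc lam hl).1.trans U V W mU mV mW (conv e1) (conv e2) measureReal_le_one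
  · intro V₁ V₂ W₁ W₂ lam a b c d e f g i hl
    exact (hDc lam hl).1.add V₁ V₂ W₁ W₂ a b c d e f (conv g) (conv i) measureReal_le_one
  · intro V W kap lam mV mW e hk hl
    obtain ⟨hc1, h1⟩ := hDc kap hk
    obtain ⟨hc2, h2⟩ := hDc lam hl
    obtain ⟨hc3, h3⟩ := hDc (kap * lam) (mul_pos hk hl)
    obtain ⟨s, hs, hs', h⟩ := exists_incr_mul (I := I) hD hAPE hk hl
    refine hc3.unique (hc1.sum hc2) hD hs hs' (fun V W e hV => ?_) mV mW (conv e)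
    obtain ⟨𝒜, A₁, A₂, C, C', hC, hC', hA, hsum⟩ := h V W e hV
    rw [h1 V W _ _ _ e hC, h2 V W _ _ _ e hC', h3 V W _ _ _ e hA, hsum]
  · intro Δ' hΔ' V W lam mV mW e hl
    have hb := bd_pos hl
    have hb' := five_mul_bd_le_one hl
    refine (hΔ'.cocycle hl).unique (hDc lam hl).1 hD hb (by linarith) (fun V W e hV => ?_)
      mV mW (conv e)
    obtain ⟨C, hC⟩ := exists_memF_of_le_bd hD hl e hV
    rw [(hDc lam hl).2 V W _ _ _ e hC]
    exact hΔ'.1 V W lam e.mV e.mW ((measureReal_eq_measureReal_iff).1 e.eq) hl e.disj _ _ _ hC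

end APE
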